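/- Let Γ be a distance-regular graph with classical parameters (D, b, α, β) and diameter D ≥ 3, and assume its intersection numbers satisfy a₁ = 0 and a₂ ≠ 0. Then Γ is 3-bounded: for all vertices x, y with ∂(x,y) ≤ 3 there exists a regular weak-geodetically closed subgraph of Γ of diameter ∂(x,y) containing x and y. -/

import Mathlib

/-!
Common definitions: distance-regular graphs (via an intersection-number function `p`),
classical parameters, and the sets `B(x,y)`, `A(x,y)`, `C(x,y)`.
The distance `∂` is `SimpleGraph.dist`.
-/

variable {V : Type*}

/-- `Γ` is distance-regular with intersection numbers `p h i j = p^h_{ij}`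
(for indices up to the diameter `D`). -/
def SimpleGraph.IsDistRegularWith (G : SimpleGraph V) (D : ℕ) (p : ℕ → ℕ → ℕ → ℕ) : Prop :=
  ∀ h i j : ℕ, h ≤ D → i ≤ D → j ≤ D → ∀ x y : V, G.dist x y = h →
    {z : V | G.dist x z = i ∧ G.dist y z = j}.ncard = p h i j

/-- The Gaussian bracket `[i] = 1 + b + b² + ⋯ + b^{i-1}`. -/
def gaussBracket (b : ℝ) (i : ℕ) : ℝ := ∑ k ∈ Finset.range i, b ^ k

/-- A distance-regular graph with intersection numbers `p` has classical parameters
`(D, b, α, β)`: `b ∉ {0, -1}`, `c_i = [i](1 + α[i-1])` and `b_i = ([D]-[i])(β - α[i])`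
for `0 ≤ i ≤ D`, where `c_i = p^i_{1,i-1}` and `b_i = p^i_{1,i+1}`. -/
def HasClassicalParams (D : ℕ) (p : ℕ → ℕ → ℕ → ℕ) (b α β : ℝ) : Prop :=
  b ≠ 0 ∧ b ≠ -1 ∧
    (∀ i ≤ D, (p i 1 (i - 1) : ℝ) = gaussBracket b i * (1 + α * gaussBracket b (i - 1))) ∧
    (∀ i ≤ D, (p i 1 (i + 1) : ℝ) =
      (gaussBracket b D - gaussBracket b i) * (β - α * gaussBracket b i))

/-- `B(x,y) = Γ₁(x) ∩ Γ_{∂(x,y)+1}(y)`. -/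
def Bset (G : SimpleGraph V) (x y : V) : Set V :=
  {v | G.dist x v = 1 ∧ G.dist y v = G.dist x y + 1}

/-- `A(x,y) = Γ₁(x) ∩ Γ_{∂(x,y)}(y)`. -/
def Aset (G : SimpleGraph V) (x y : V) : Set V :=
  {v | G.dist x v = 1 ∧ G.dist y v = G.dist x y}

/-- `C(x,y) = Γ₁(x) ∩ Γ_{∂(x,y)-1}(y)`. -/
def Cset (G : SimpleGraph V) (x y : V) : Set V :=
  {v | G.dist x v = 1 ∧ G.dist y v = G.dist x y - 1}

/-!
Let `q = b`. The matrix `(q^{-∂(x,y)})` generates a `Q`-polynomial structure, since its Hadamard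
powers are triangular under multiplication by the adjacency matrix `A`; hence it satisfies
Terwilliger's tridiagonal relation with `A`. Comparing entries yields balanced set conditions for
the sets `A(x,y)` and `C(x,y)`. The assumptions `a₁ = 0 ≠ a₂` force `b` to be an integer at most
`-2`, and then the balanced set conditions exclude parallelograms of length 3 and 4.

To a pair `(x,y)` at distance `h ∈ {2, 3}` attach the weight function
`v ↦ ∑ q^{-∂(v,s)} - κ q^{-∂(v,x)}`, the sum being over `s ∈ C(x,y) ∪ A(x,y)`. By the balanced set
condition it is symmetric in `x` and `y`, and it does not change when an endpoint moves along an
edge to another vertex at distance `h` from the other endpoint. The vertices lying in a pair with a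
given weight function therefore induce a regular graph, and the connected component of `x` in it is
the required subgraph. That this component is closed of diameter `h` follows by counting in the
spheres around its vertices; for `h = 3` the case `b = -2` needs a separate argument.
-/

open Matrix

/-! ### Q-polynomial structures -/

section HadamardPow

/-- The `n`-th power of a real matrix with respect to the entrywise (Hadamard) product. -/
def hadamardPow (T : Matrix V V ℝ) (n : ℕ) : Matrix V V ℝ := T.map (· ^ n)

/-- The span of the Hadamard powers of `T` with exponent less than `n`, i.e. the matrices whose
entries are a polynomial of degree less than `n` in the entries of `T`. -/
def hadamardSpan (T : Matrix V V ℝ) (n : ℕ) : Submodule ℝ (Matrix V V ℝ) :=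
  Submodule.span ℝ (hadamardPow T '' Set.Iio n)

variable {T M N : Matrix V V ℝ} {m n : ℕ}

lemma hadamardPow_mem_hadamardSpan (h : m < n) : hadamardPow T m ∈ hadamardSpan T n :=
  Submodule.subset_span ⟨m, h, rfl⟩

lemma hadamardSpan_mono (h : m ≤ n) : hadamardSpan T m ≤ hadamardSpan T n :=
  Submodule.span_mono (Set.image_mono (Set.Iio_subset_Iio h))

lemma isSymm_of_mem_hadamardSpan (hT : T.IsSymm) (hM : M ∈ hadamardSpan T n) : M.IsSymm := by
  induction hM using Submodule.span_induction with
  | mem _ h => obtain ⟨j, -, rfl⟩ := h; exact hT.map _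
  | zero => exact Matrix.isSymm_zero
  | add _ _ _ _ hx hy => exact hx.add hy
  | smul k _ _ hx => exact hx.smul k

lemma hadamardPow_hadamard_hadamardPow (i j : ℕ) :
    hadamardPow T i ⊙ hadamardPow T j = hadamardPow T (i + j) := by
  ext y z
  simp [hadamardPow, pow_add]

lemma hadamard_mem_hadamardSpan (hM : M ∈ hadamardSpan T (m + 1))
    (hN : N ∈ hadamardSpan T (n + 1)) : M ⊙ N ∈ hadamardSpan T (m + n + 1) := by
  induction hM, hN using Submodule.span_induction₂ with
  | mem_mem _ _ hx hy =>
    obtain ⟨i, hi, rfl⟩ := hx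
    obtain ⟨j, hj, rfl⟩ := hy
    rw [hadamardPow_hadamard_hadamardPow]
    refine hadamardPow_mem_hadamardSpan ?_
    rw [Set.mem_Iio] at hi hj
    omega
  | zero_left => simp
  | zero_right => simp
  | add_left _ _ _ _ _ _ hx hy => rw [add_hadamard]; exact add_mem hx hy
  | add_right _ _ _ _ _ _ hx hy => rw [hadamard_add]; exact add_mem hx hy
  | smul_left k _ _ _ _ h => rw [smul_hadamard]; exact Submodule.smul_mem _ k h
  | smul_right k _ _ _ _ h => rw [hadamard_smul]; exact Submodule.smul_mem _ k h

lemma hadamardSpan_le_span_range {E : ℕ → Matrix V V ℝ}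
    (hE : ∀ n, hadamardPow T n - E n ∈ hadamardSpan T n) (n : ℕ) :
    hadamardSpan T n ≤ Submodule.span ℝ (Set.range E) := by
  induction n using Nat.strong_induction_on with
  | _ n ih =>
    refine Submodule.span_le.mpr ?_
    rintro _ ⟨j, hj, rfl⟩
    rw [← sub_add_cancel (hadamardPow T j) (E j)]
    exact add_mem (ih j hj (hE j)) (Submodule.subset_span ⟨j, rfl⟩)

end HadamardPow

section Trace

variable [Fintype V]

lemma eq_zero_of_isSymm_of_trace_mul_self_eq_zero {M : Matrix V V ℝ} (hM : M.IsSymm)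
    (h : (M * M).trace = 0) : M = 0 := by
  rw [← Matrix.trace_conjTranspose_mul_self_eq_zero_iff, conjTranspose_eq_transpose_of_trivial,
    hM.eq, h]

lemma exists_mem_forall_trace_eq_zero (S : Submodule ℝ (Matrix V V ℝ)) (F : Matrix V V ℝ) :
    ∃ g ∈ S, ∀ M ∈ S, ((F - g) * Mᵀ).trace = 0 := by
  classical
  let := toMatrixNormedAddCommGroup (1 : Matrix V V ℝ) PosDef.one
  let := toMatrixInnerProductSpace (1 : Matrix V V ℝ) PosSemidef.one
  refine ⟨S.starProjection F, S.starProjection_apply_mem F, fun M hM => ?_⟩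
  have h : ((F - S.starProjection F) * 1 * Mᴴ).trace = 0 :=
    (Submodule.mem_orthogonal _ _).mp (S.sub_starProjection_mem_orthogonal F) M hM
  rwa [mul_one, conjTranspose_eq_transpose_of_trivial] at h

lemma sum_diagonal_mul_mul_diagonal [DecidableEq V] (T N : Matrix V V ℝ) :
    ∑ x, diagonal (T x) * N * diagonal (T x) = N ⊙ (Tᵀ * T) := by
  ext y z
  rw [Matrix.sum_apply, hadamard_apply, mul_apply, Finset.mul_sum]
  simp only [mul_diagonal, diagonal_mul, transpose_apply]
  exact Finset.sum_congr rfl fun x _ => by ring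

lemma sum_trace_transpose_mul_self [DecidableEq V] (T E E' : Matrix V V ℝ) :
    ∑ x, ((E * diagonal (T x) * E')ᵀ * (E * diagonal (T x) * E')).trace =
      (Eᵀ * E * ((E' * E'ᵀ) ⊙ (Tᵀ * T))).trace := by
  rw [← sum_diagonal_mul_mul_diagonal, Finset.mul_sum, trace_sum]
  refine Finset.sum_congr rfl fun x _ => ?_
  rw [transpose_mul, transpose_mul, diagonal_transpose]
  calc (E'ᵀ * (diagonal (T x) * Eᵀ) * (E * diagonal (T x) * E')).trace
      = (E'ᵀ * (diagonal (T x) * (Eᵀ * E) * diagonal (T x) * E')).trace := by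
        simp only [Matrix.mul_assoc]
    _ = (Eᵀ * E * (diagonal (T x) * (E' * E'ᵀ) * diagonal (T x))).trace := by
        rw [trace_mul_comm, Matrix.mul_assoc, Matrix.mul_assoc, Matrix.mul_assoc, trace_mul_comm]
        simp only [Matrix.mul_assoc]

end Trace

section QPolynomial

section Tridiagonal

variable [Fintype V] {A : Matrix V V ℝ}

/-- The expression `A²D - β ADA + DA² - γ (AD + DA) - ϱ D` of the tridiagonal relations, in which
`D` stands for a dual adjacency matrix. -/
def tridiagonal (A D : Matrix V V ℝ) (β γ ϱ : ℝ) : Matrix V V ℝ :=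
  A * A * D - β • (A * D * A) + D * (A * A) - γ • (A * D + D * A) - ϱ • D

lemma mul_tridiagonal_mul {E E' D : Matrix V V ℝ} {s t : ℝ} (hE : E * A = s • E)
    (hE' : A * E' = t • E') (β γ ϱ : ℝ) :
    E * tridiagonal A D β γ ϱ * E' =
      (s ^ 2 - β * s * t + t ^ 2 - γ * (s + t) - ϱ) • (E * D * E') := by
  have hleft (Y : Matrix V V ℝ) : E * (A * Y) = s • (E * Y) := by
    rw [← mul_assoc, hE, smul_mul_assoc]
  simp only [tridiagonal, sub_mul, add_mul, mul_sub, mul_add, smul_mul_assoc, mul_smul_comm,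
    mul_assoc, hE', hleft, smul_smul, smul_add]
  module

end Tridiagonal

variable [Fintype V] [DecidableEq V] {A T : Matrix V V ℝ} {θ : ℕ → ℝ}

/-- `T` is a (dual) generator of a `Q`-polynomial structure on the algebra generated by the
symmetric matrix `A`: multiplication by `A` is triangular, with diagonal `θ`, on the Hadamard
powers of `T`, and these powers are polynomials in `A`. -/
structure IsQPolynomial (A T : Matrix V V ℝ) (θ : ℕ → ℝ) : Prop where
  isSymm_left : A.IsSymm
  isSymm_right : T.IsSymm
  mul_hadamardPow_sub_mem (n : ℕ) : A * hadamardPow T n - θ n • hadamardPow T n ∈ hadamardSpan T n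
  hadamardPow_mem_adjoin (n : ℕ) : hadamardPow T n ∈ Algebra.adjoin ℝ {A}

namespace IsQPolynomial

variable {M N : Matrix V V ℝ} {m n : ℕ}

lemma mul_mem (h : IsQPolynomial A T θ) (hM : M ∈ hadamardSpan T n) :
    A * M ∈ hadamardSpan T n := by
  induction hM using Submodule.span_induction with
  | mem _ hx =>
    obtain ⟨j, hj, rfl⟩ := hx
    rw [← sub_add_cancel (A * hadamardPow T j) (θ j • hadamardPow T j)]
    exact add_mem (hadamardSpan_mono (le_of_lt hj) (h.mul_hadamardPow_sub_mem j))
      (Submodule.smul_mem _ _ (hadamardPow_mem_hadamardSpan hj))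
  | zero => simp
  | add _ _ _ _ hx hy => rw [mul_add]; exact add_mem hx hy
  | smul k _ _ hx => rw [mul_smul_comm]; exact Submodule.smul_mem _ k hx

lemma mul_mem_of_mem_adjoin (h : IsQPolynomial A T θ) (hN : N ∈ Algebra.adjoin ℝ {A})
    (hM : M ∈ hadamardSpan T n) : N * M ∈ hadamardSpan T n := by
  induction hN using Algebra.adjoin_induction generalizing M with
  | mem _ hx => rw [Set.mem_singleton_iff.mp hx]; exact h.mul_mem hM
  | algebraMap k => simpa [Algebra.algebraMap_eq_smul_one] using Submodule.smul_mem _ k hM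
  | add _ _ _ _ hx hy => rw [add_mul]; exact add_mem (hx hM) (hy hM)
  | mul _ _ _ _ hx hy => rw [mul_assoc]; exact hx (hy hM)

lemma mem_adjoin (h : IsQPolynomial A T θ) (hM : M ∈ hadamardSpan T n) :
    M ∈ Algebra.adjoin ℝ {A} := by
  have hle : hadamardSpan T n ≤ Subalgebra.toSubmodule (Algebra.adjoin ℝ {A}) :=
    Submodule.span_le.mpr (Set.image_subset_iff.mpr fun j _ => h.hadamardPow_mem_adjoin j)
  exact hle hM

lemma mul_mem_of_mem_of_mem (h : IsQPolynomial A T θ) (hN : N ∈ hadamardSpan T m)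
    (hM : M ∈ hadamardSpan T n) : N * M ∈ hadamardSpan T n :=
  h.mul_mem_of_mem_adjoin (h.mem_adjoin hN) hM

/-- The projection of the `n`-th Hadamard power of `T` to the orthogonal complement of the
lower ones: an unnormalised primitive idempotent of the algebra generated by `A`. -/
structure IsEigenmatrix (A T : Matrix V V ℝ) (θ : ℕ → ℝ) (n : ℕ) (E : Matrix V V ℝ) : Prop where
  mem : E ∈ hadamardSpan T (n + 1)
  hadamardPow_sub_mem : hadamardPow T n - E ∈ hadamardSpan T n
  trace_mul_eq_zero : ∀ M ∈ hadamardSpan T n, (E * M).trace = 0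
  left_mul : A * E = θ n • E
  right_mul : E * A = θ n • E

lemma exists_isEigenmatrix (h : IsQPolynomial A T θ) (n : ℕ) :
    ∃ E, IsEigenmatrix A T θ n E := by
  obtain ⟨g, hg, hperp⟩ := exists_mem_forall_trace_eq_zero (hadamardSpan T n) (hadamardPow T n)
  set E := hadamardPow T n - g with hE
  have hEmem : E ∈ hadamardSpan T (n + 1) :=
    sub_mem (hadamardPow_mem_hadamardSpan n.lt_succ_self) (hadamardSpan_mono n.le_succ hg)
  have hEperp (M) (hM : M ∈ hadamardSpan T n) : (E * M).trace = 0 := by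
    simpa only [(isSymm_of_mem_hadamardSpan h.isSymm_right hM).eq] using hperp M hM
  have hsymm {j} {M} (hM : M ∈ hadamardSpan T j) : M.IsSymm :=
    isSymm_of_mem_hadamardSpan h.isSymm_right hM
  have hcomm : A * E = E * A := by
    rw [← (hsymm (h.mul_mem hEmem)).eq, transpose_mul, (hsymm hEmem).eq, h.isSymm_left.eq]
  have hdefect : A * E - θ n • E ∈ hadamardSpan T n := by
    have : A * E - θ n • E =
        A * hadamardPow T n - θ n • hadamardPow T n - (A * g - θ n • g) := by
      rw [hE, mul_sub, smul_sub]; abel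
    rw [this]
    exact sub_mem (h.mul_hadamardPow_sub_mem n)
      (sub_mem (h.mul_mem hg) (Submodule.smul_mem _ _ hg))
  have hsq : (A * E - θ n • E) * (A * E - θ n • E) =
      E * (A * (A * E - θ n • E) - θ n • (A * E - θ n • E)) := by
    nth_rw 1 [hcomm]
    simp only [sub_mul, mul_sub, smul_mul_assoc, mul_smul_comm, mul_assoc]
  have hAE : A * E = θ n • E := by
    rw [← sub_eq_zero]
    refine eq_zero_of_isSymm_of_trace_mul_self_eq_zero (hsymm hdefect) ?_
    rw [hsq]
    exact hEperp _ (sub_mem (h.mul_mem hdefect) (Submodule.smul_mem _ _ hdefect))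
  exact ⟨E, hEmem, by simpa [hE] using hg, hEperp, hAE, hcomm ▸ hAE⟩

lemma IsEigenmatrix.mul_diagonal_mul_eq_zero (h : IsQPolynomial A T θ) {E E' : Matrix V V ℝ}
    (hE : IsEigenmatrix A T θ n E) (hE' : E' ∈ hadamardSpan T (m + 1)) (hmn : m + 2 ≤ n) (x : V) :
    E * diagonal (T x) * E' = 0 := by
  have hEs := isSymm_of_mem_hadamardSpan h.isSymm_right hE.mem
  have hEs' := isSymm_of_mem_hadamardSpan h.isSymm_right hE'
  have hT : T ∈ hadamardSpan T 2 := by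
    simpa [hadamardPow] using hadamardPow_mem_hadamardSpan (T := T) one_lt_two
  have hmem : (E' * E') ⊙ (T * T) ∈ hadamardSpan T n :=
    hadamardSpan_mono hmn <| hadamard_mem_hadamardSpan (h.mul_mem_of_mem_of_mem hE' hE')
      (h.mul_mem_of_mem_of_mem hT hT)
  have hsum : ∑ x, ((E * diagonal (T x) * E')ᵀ * (E * diagonal (T x) * E')).trace = 0 := by
    rw [sum_trace_transpose_mul_self, hEs.eq, hEs'.eq, h.isSymm_right.eq, mul_assoc]
    exact hE.trace_mul_eq_zero _ (h.mul_mem_of_mem_of_mem hE.mem hmem)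
  rw [Finset.sum_eq_zero_iff_of_nonneg fun x _ => ?_] at hsum
  · rw [← Matrix.trace_conjTranspose_mul_self_eq_zero_iff, conjTranspose_eq_transpose_of_trivial]
    exact hsum x (Finset.mem_univ x)
  · exact (posSemidef_conjTranspose_mul_self (E * diagonal (T x) * E')).trace_nonneg

lemma IsEigenmatrix.mul_diagonal_mul_eq_zero' (h : IsQPolynomial A T θ) {E E' : Matrix V V ℝ}
    (hE : IsEigenmatrix A T θ n E) (hE' : E' ∈ hadamardSpan T (m + 1)) (hmn : m + 2 ≤ n) (x : V) :
    E' * diagonal (T x) * E = 0 := by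
  have hzero := congrArg Matrix.transpose (hE.mul_diagonal_mul_eq_zero h hE' hmn x)
  rwa [transpose_mul, transpose_mul, (isSymm_of_mem_hadamardSpan h.isSymm_right hE.mem).eq,
    (isSymm_of_mem_hadamardSpan h.isSymm_right hE').eq, diagonal_transpose, transpose_zero,
    ← mul_assoc] at hzero

theorem commute_tridiagonal (h : IsQPolynomial A T θ) {N : ℕ} (hone : 1 ∈ hadamardSpan T N)
    {β γ ϱ : ℝ}
    (hθ : ∀ n, θ n ^ 2 - β * θ n * θ (n + 1) + θ (n + 1) ^ 2 - γ * (θ n + θ (n + 1)) - ϱ = 0)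
    (x : V) : Commute A (tridiagonal A (diagonal (T x)) β γ ϱ) := by
  choose E hE using h.exists_isEigenmatrix
  set Z := tridiagonal A (diagonal (T x)) β γ ϱ
  have hspan (M : Matrix V V ℝ) (hM : M ∈ Set.range E) (M') (hM' : M' ∈ Set.range E) :
      M * (A * Z - Z * A) * M' = 0 := by
    obtain ⟨⟨n, rfl⟩, ⟨m, rfl⟩⟩ := hM, hM'
    have hcomm : E n * (A * Z - Z * A) * E m = (θ n - θ m) • (E n * Z * E m) := by
      rw [mul_sub, sub_mul, ← mul_assoc, (hE n).right_mul, mul_assoc (E n) (Z * A), mul_assoc Z,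
        (hE m).left_mul, smul_mul_assoc, smul_mul_assoc, mul_smul_comm, mul_smul_comm, ← mul_assoc,
        sub_smul]
    rw [hcomm, mul_tridiagonal_mul (hE n).right_mul (hE m).left_mul]
    rcases lt_trichotomy n m with hlt | rfl | hlt
    · obtain rfl | hlt' := Nat.eq_or_lt_of_le hlt
      · rw [hθ n, zero_smul, smul_zero]
      · rw [(hE m).mul_diagonal_mul_eq_zero' h (hE n).mem hlt' x, smul_zero, smul_zero]
    · rw [sub_self, zero_smul]
    · obtain rfl | hlt' := Nat.eq_or_lt_of_le hlt
      · have hθ' := hθ m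
        rw [show θ m.succ ^ 2 - β * θ m.succ * θ m + θ m ^ 2 - γ * (θ m.succ + θ m) - ϱ = 0 by
          rw [← hθ']; simp only [Nat.succ_eq_add_one]; ring, zero_smul, smul_zero]
      · rw [(hE n).mul_diagonal_mul_eq_zero h (hE m).mem hlt' x, smul_zero, smul_zero]
  have hone' := hadamardSpan_le_span_range (fun n => (hE n).hadamardPow_sub_mem) N hone
  have hzero : 1 * (A * Z - Z * A) * 1 = 0 := by
    refine Submodule.span_induction₂ (p := fun M M' _ _ => M * (A * Z - Z * A) * M' = 0)
      (fun M M' hM hM' => hspan M hM M' hM') ?_ ?_ ?_ ?_ ?_ ?_ hone' hone'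
    all_goals simp +contextual [add_mul, mul_add]
  rwa [one_mul, mul_one, sub_eq_zero] at hzero

end IsQPolynomial

end QPolynomial

/-! ### Neighbors and distance matrices -/

section Neighbors

variable [Fintype V] {G : SimpleGraph V} {x y s : V}

open Classical in
/-- The set `C(x, y)` of neighbors of `x` at distance `∂(x, y) - 1` from `y`. -/
noncomputable def closerNbrs (G : SimpleGraph V) (x y : V) : Finset V :=
  {s | G.Adj x s ∧ G.dist s y + 1 = G.dist x y}

open Classical in
/-- The set `A(x, y)` of neighbors of `x` at distance `∂(x, y)` from `y`. -/
noncomputable def levelNbrs (G : SimpleGraph V) (x y : V) : Finset V :=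
  {s | G.Adj x s ∧ G.dist s y = G.dist x y}

open Classical in
/-- The set `B(x, y)` of neighbors of `x` at distance `∂(x, y) + 1` from `y`. -/
noncomputable def fartherNbrs (G : SimpleGraph V) (x y : V) : Finset V :=
  {s | G.Adj x s ∧ G.dist s y = G.dist x y + 1}

open Classical in
/-- The set `C(x, y) ∪ A(x, y)` of neighbors of `x` at distance at most `∂(x, y)` from `y`. -/
noncomputable def notFartherNbrs (G : SimpleGraph V) (x y : V) : Finset V :=
  {s | G.Adj x s ∧ G.dist s y ≤ G.dist x y}

@[simp]
lemma mem_closerNbrs : s ∈ closerNbrs G x y ↔ G.Adj x s ∧ G.dist s y + 1 = G.dist x y := by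
  simp [closerNbrs]

@[simp]
lemma mem_levelNbrs : s ∈ levelNbrs G x y ↔ G.Adj x s ∧ G.dist s y = G.dist x y := by
  simp [levelNbrs]

@[simp]
lemma mem_fartherNbrs : s ∈ fartherNbrs G x y ↔ G.Adj x s ∧ G.dist s y = G.dist x y + 1 := by
  simp [fartherNbrs]

@[simp]
lemma mem_notFartherNbrs : s ∈ notFartherNbrs G x y ↔ G.Adj x s ∧ G.dist s y ≤ G.dist x y := by
  simp [notFartherNbrs]

end Neighbors

section Dist

variable {G : SimpleGraph V} {x y s : V}

lemma dist_le_dist_add_one_of_adj (hG : G.Connected) (h : G.Adj x s) (y : V) :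
    G.dist s y ≤ G.dist x y + 1 := by
  have := hG.dist_triangle (u := s) (v := x) (w := y)
  rw [SimpleGraph.dist_eq_one_iff_adj.mpr h.symm] at this
  lia

lemma exists_adj_dist_eq (hG : G.Connected) {n : ℕ} (h : G.dist x y = n + 1) :
    ∃ s, G.Adj x s ∧ G.dist s y = n := by
  obtain ⟨w, hw⟩ := hG.exists_walk_length_eq_dist x y
  cases w with
  | nil => simp at h
  | cons hadj w =>
    refine ⟨_, hadj, ?_⟩
    have := SimpleGraph.dist_le w
    have := dist_le_dist_add_one_of_adj hG hadj.symm y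
    rw [SimpleGraph.Walk.length_cons] at hw
    lia

lemma exists_dist_eq_of_le (hG : G.Connected) {m n : ℕ} (h : G.dist x y = n) (hmn : m ≤ n) :
    ∃ s, G.dist s y = m := by
  induction n generalizing x with
  | zero => exact ⟨x, by lia⟩
  | succ n ih =>
    obtain rfl | hmn := Nat.le_or_eq_of_le_succ hmn |>.symm
    · exact ⟨x, h⟩
    · obtain ⟨s, -, hs⟩ := exists_adj_dist_eq hG h
      exact ih hs hmn

open Classical in
lemma sum_adj_dist_mul [Fintype V] (hG : G.Connected) (z y : V) (f : ℕ → ℝ) (t : V → ℝ) :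
    (∑ v, if G.Adj z v then f (G.dist v y) * t v else 0) =
      f (G.dist z y - 1) * ∑ v ∈ closerNbrs G z y, t v
        + f (G.dist z y) * ∑ v ∈ levelNbrs G z y, t v
        + f (G.dist z y + 1) * ∑ v ∈ fartherNbrs G z y, t v := by
  simp only [closerNbrs, levelNbrs, fartherNbrs, Finset.sum_filter, Finset.mul_sum]
  rw [← Finset.sum_add_distrib, ← Finset.sum_add_distrib]
  refine Finset.sum_congr rfl fun v _ => ?_
  by_cases h : G.Adj z v
  · have := dist_le_dist_add_one_of_adj hG h y
    have := dist_le_dist_add_one_of_adj hG h.symm y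
    obtain hv | hv | hv : G.dist z y = G.dist v y + 1 ∨ G.dist z y = G.dist v y ∨
        G.dist v y = G.dist z y + 1 := by lia
    all_goals simp [h, hv, add_assoc]
  · simp [h]

end Dist

/-- A connected graph of diameter `D` is distance-regular with intersection numbers
`c i`, `a i`, `b i`: these are the sizes of `C(x, y)`, `A(x, y)`, `B(x, y)` if `∂(x, y) = i`. -/
structure HasIntersectionArray [Fintype V] (G : SimpleGraph V) (D : ℕ) (c a b : ℕ → ℕ) :
    Prop where
  connected : G.Connected
  dist_le (x y : V) : G.dist x y ≤ D
  exists_dist_eq_diam : ∃ x y : V, G.dist x y = D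
  card_closerNbrs (x y : V) : (closerNbrs G x y).card = c (G.dist x y)
  card_levelNbrs (x y : V) : (levelNbrs G x y).card = a (G.dist x y)
  card_fartherNbrs (x y : V) : (fartherNbrs G x y).card = b (G.dist x y)

namespace HasIntersectionArray

variable [Fintype V] {G : SimpleGraph V} {D m : ℕ} {c a b : ℕ → ℕ}

lemma exists_dist_eq (H : HasIntersectionArray G D c a b) (hm : m ≤ D) :
    ∃ x y : V, G.dist x y = m := by
  obtain ⟨x, y, h⟩ := H.exists_dist_eq_diam
  obtain ⟨s, hs⟩ := exists_dist_eq_of_le H.connected h hm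
  exact ⟨s, y, hs⟩

lemma c_zero (H : HasIntersectionArray G D c a b) : c 0 = 0 := by
  obtain ⟨x, y, h⟩ := H.exists_dist_eq D.zero_le
  rw [← congrArg c h, ← H.card_closerNbrs, Finset.card_eq_zero, Finset.eq_empty_iff_forall_notMem]
  intro s hs
  rw [mem_closerNbrs] at hs
  lia

lemma a_zero (H : HasIntersectionArray G D c a b) : a 0 = 0 := by
  obtain ⟨x, y, h⟩ := H.exists_dist_eq D.zero_le
  obtain rfl := H.connected.dist_eq_zero_iff.mp h
  rw [← congrArg a h, ← H.card_levelNbrs, Finset.card_eq_zero, Finset.eq_empty_iff_forall_notMem]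
  intro s hs
  rw [mem_levelNbrs, h, H.connected.dist_eq_zero_iff] at hs
  exact hs.1.ne hs.2.symm

lemma c_pos (H : HasIntersectionArray G D c a b) (hm : m + 1 ≤ D) : 0 < c (m + 1) := by
  obtain ⟨x, y, h⟩ := H.exists_dist_eq hm
  obtain ⟨s, hxs, hsy⟩ := exists_adj_dist_eq H.connected h
  rw [← h, ← H.card_closerNbrs, Finset.card_pos]
  exact ⟨s, mem_closerNbrs.mpr ⟨hxs, by lia⟩⟩

lemma add_add_eq_b_zero (H : HasIntersectionArray G D c a b) (hm : m ≤ D) :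
    c m + a m + b m = b 0 := by
  classical
  obtain ⟨x, y, h⟩ := H.exists_dist_eq hm
  have hxy := sum_adj_dist_mul H.connected x y (fun _ => 1) fun _ => 1
  have hxx := sum_adj_dist_mul H.connected x x (fun _ => 1) fun _ => 1
  simp only [one_mul, Finset.sum_const, nsmul_eq_mul, mul_one, H.card_closerNbrs,
    H.card_levelNbrs, H.card_fartherNbrs, h, SimpleGraph.dist_self, H.c_zero, H.a_zero] at hxy hxx
  rw [hxx] at hxy
  exact_mod_cast (by simpa using hxy.symm : (c m + a m + b m : ℝ) = b 0)

end HasIntersectionArray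

section DistMatrix

variable {G : SimpleGraph V}

/-- The matrix whose `(y, z)` entry is `f (∂(y, z))`. In particular `distMatrix G (Pi.single j 1)`
is the distance-`j` matrix, and `distMatrix G (Pi.single 1 1)` the adjacency matrix, of `G`. -/
noncomputable def distMatrix (G : SimpleGraph V) : (ℕ → ℝ) →ₗ[ℝ] Matrix V V ℝ where
  toFun f := Matrix.of fun y z => f (G.dist y z)
  map_add' _ _ := rfl
  map_smul' _ _ := rfl

@[simp]
lemma distMatrix_apply (f : ℕ → ℝ) (y z : V) : distMatrix G f y z = f (G.dist y z) := rfl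

lemma isSymm_distMatrix (f : ℕ → ℝ) : (distMatrix G f).IsSymm := by
  ext y z
  simp [SimpleGraph.dist_comm]

lemma hadamardPow_distMatrix (f : ℕ → ℝ) (n : ℕ) :
    hadamardPow (distMatrix G f) n = distMatrix G (f ^ n) := rfl

lemma distMatrix_single_zero [DecidableEq V] (hG : G.Connected) :
    distMatrix G (Pi.single 0 1) = 1 := by
  ext y z
  simp [Pi.single_apply, Matrix.one_apply, hG.dist_eq_zero_iff]

open Classical in
lemma distMatrix_single_one_apply (y z : V) :
    distMatrix G (Pi.single 1 1) y z = if G.Adj y z then 1 else 0 := by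
  simp [Pi.single_apply, SimpleGraph.dist_eq_one_iff_adj]

variable [Fintype V]

lemma adj_mul_diagonal_mul_distMatrix_apply [DecidableEq V] (hG : G.Connected) (f : ℕ → ℝ)
    (t : V → ℝ) (y z : V) :
    (distMatrix G (Pi.single 1 1) * diagonal t * distMatrix G f) y z =
      f (G.dist y z - 1) * ∑ v ∈ closerNbrs G y z, t v
        + f (G.dist y z) * ∑ v ∈ levelNbrs G y z, t v
        + f (G.dist y z + 1) * ∑ v ∈ fartherNbrs G y z, t v := by
  rw [← sum_adj_dist_mul hG, Matrix.mul_apply]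
  refine Finset.sum_congr rfl fun v _ => ?_
  rw [Matrix.mul_diagonal, distMatrix_single_one_apply, distMatrix_apply]
  split_ifs <;> ring

lemma distMatrix_mul_diagonal_mul_adj_apply [DecidableEq V] (hG : G.Connected) (f : ℕ → ℝ)
    (t : V → ℝ) (y z : V) :
    (distMatrix G f * diagonal t * distMatrix G (Pi.single 1 1)) y z =
      f (G.dist y z - 1) * ∑ v ∈ closerNbrs G z y, t v
        + f (G.dist y z) * ∑ v ∈ levelNbrs G z y, t v
        + f (G.dist y z + 1) * ∑ v ∈ fartherNbrs G z y, t v := by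
  rw [G.dist_comm (u := y), ← adj_mul_diagonal_mul_distMatrix_apply hG,
    ← Matrix.transpose_apply (_ * _ * distMatrix G f), transpose_mul, transpose_mul,
    diagonal_transpose, (isSymm_distMatrix f).eq, (isSymm_distMatrix _).eq, ← mul_assoc]

end DistMatrix

/-- The action of the adjacency matrix on functions of the distance, for intersection numbers
`c`, `a`, `b`. -/
def intersectionOp (c a b : ℕ → ℕ) (f : ℕ → ℝ) (i : ℕ) : ℝ :=
  c i * f (i - 1) + a i * f i + b i * f (i + 1)

lemma intersectionOp_single_succ (c a b : ℕ → ℕ) (i : ℕ) :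
    intersectionOp c a b (Pi.single (i + 1) 1) =
      (b i : ℝ) • Pi.single i 1 + (a (i + 1) : ℝ) • Pi.single (i + 1) 1
        + (c (i + 2) : ℝ) • Pi.single (i + 2) 1 := by
  ext j
  simp only [intersectionOp, Pi.add_apply, Pi.smul_apply, Pi.single_apply, smul_eq_mul]
  obtain rfl | h₀ := eq_or_ne j i
  · simp
  obtain rfl | h₁ := eq_or_ne j (i + 1)
  · simp
  obtain rfl | h₂ := eq_or_ne j (i + 2)
  · simp
  · simp [h₀, h₁, h₂, show j - 1 ≠ i + 1 by lia]

namespace HasIntersectionArray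

variable [Fintype V] {G : SimpleGraph V} {D : ℕ} {c a b : ℕ → ℕ}

lemma adj_mul_distMatrix (H : HasIntersectionArray G D c a b) (f : ℕ → ℝ) :
    distMatrix G (Pi.single 1 1) * distMatrix G f = distMatrix G (intersectionOp c a b f) := by
  classical
  ext y z
  have h := adj_mul_diagonal_mul_distMatrix_apply H.connected f 1 y z
  rw [show diagonal (1 : V → ℝ) = 1 from diagonal_one, mul_one] at h
  simp only [h, Pi.one_apply, Finset.sum_const, nsmul_one, H.card_closerNbrs, H.card_levelNbrs,
    H.card_fartherNbrs, distMatrix_apply, intersectionOp]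
  ring

variable [DecidableEq V]

lemma distMatrix_single_mem_adjoin (H : HasIntersectionArray G D c a b) {i : ℕ} (hi : i ≤ D) :
    distMatrix G (Pi.single i 1) ∈ Algebra.adjoin ℝ {distMatrix G (Pi.single 1 1)} := by
  have hadj := Algebra.self_mem_adjoin_singleton ℝ (distMatrix G (Pi.single 1 1))
  induction i using Nat.twoStepInduction with
  | zero => rw [distMatrix_single_zero H.connected]; exact one_mem _
  | one => exact hadj
  | more i ih ih' =>
    have hc : (c (i + 2) : ℝ) ≠ 0 := by exact_mod_cast (H.c_pos hi).ne'
    have hrec := H.adj_mul_distMatrix (Pi.single (i + 1) 1)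
    rw [intersectionOp_single_succ, map_add, map_add, map_smul, map_smul, map_smul,
      ← sub_eq_iff_eq_add', ← inv_smul_eq_iff₀ hc] at hrec
    rw [← hrec]
    exact Subalgebra.smul_mem _ (sub_mem (mul_mem hadj (ih' (by lia)))
      (add_mem (Subalgebra.smul_mem _ (ih (by lia)) _)
        (Subalgebra.smul_mem _ (ih' (by lia)) _))) _

lemma distMatrix_mem_adjoin (H : HasIntersectionArray G D c a b) (f : ℕ → ℝ) :
    distMatrix G f ∈ Algebra.adjoin ℝ {distMatrix G (Pi.single 1 1)} := by
  have h : distMatrix G f = ∑ i ∈ Finset.range (D + 1), f i • distMatrix G (Pi.single i 1) := by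
    ext y z
    simp [Matrix.sum_apply, Pi.single_apply, Nat.lt_succ_of_le (H.dist_le y z)]
  rw [h]
  exact sum_mem fun i hi => Subalgebra.smul_mem _
    (H.distMatrix_single_mem_adjoin (Finset.mem_range_succ_iff.mp hi)) _

omit [DecidableEq V] in
lemma distMatrix_mem_hadamardSpan (H : HasIntersectionArray G D c a b) {r : ℕ → ℝ}
    (hr : Function.Injective r) (f : ℕ → ℝ) :
    distMatrix G f ∈ hadamardSpan (distMatrix G r) (D + 1) := by
  set P := Lagrange.interpolate (Finset.range (D + 1)) r f with hP
  have hdeg : P.natDegree < D + 1 := by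
    have := Lagrange.degree_interpolate_le f hr.injOn (s := Finset.range (D + 1))
    rw [Finset.card_range, Nat.add_sub_cancel] at this
    exact Nat.lt_succ_of_le (Polynomial.natDegree_le_of_degree_le this)
  have h : distMatrix G f =
      ∑ j ∈ Finset.range (D + 1), P.coeff j • hadamardPow (distMatrix G r) j := by
    ext y z
    rw [distMatrix_apply, ← Lagrange.eval_interpolate_at_node f hr.injOn
      (Finset.mem_range_succ_iff.mpr (H.dist_le y z)), ← hP,
      Polynomial.eval_eq_sum_range' hdeg, Matrix.sum_apply]
    rfl
  rw [h]
  exact sum_mem fun j hj => Submodule.smul_mem _ _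
    (hadamardPow_mem_hadamardSpan (Finset.mem_range.mp hj))

end HasIntersectionArray

/-! ### Classical parameters -/

section ClassicalQPolynomial

variable [Fintype V] {G : SimpleGraph V} {D : ℕ} {c a b : ℕ → ℕ} {q α β : ℝ}

/-- The eigenvalues of a distance-regular graph of valency `k` with classical parameters of
base `q`, in terms of the constant terms `C` and `B` of `c i` and `b i` as polynomials
in `q ^ i`. -/
noncomputable def classicalEigenvalue (q k C B : ℝ) (n : ℕ) : ℝ :=
  k + C * (q ^ n - 1) + B * (q⁻¹ ^ n - 1)

lemma classicalEigenvalue_recurrence (hq : q ≠ 0) (k C B : ℝ) (n : ℕ) :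
    classicalEigenvalue q k C B n ^ 2
        - (q + q⁻¹) * classicalEigenvalue q k C B n * classicalEigenvalue q k C B (n + 1)
        + classicalEigenvalue q k C B (n + 1) ^ 2
        - (k - C - B) * (2 - (q + q⁻¹)) *
          (classicalEigenvalue q k C B n + classicalEigenvalue q k C B (n + 1))
        - (-C * B * (q - q⁻¹) ^ 2 - (2 - (q + q⁻¹)) * (k - C - B) ^ 2) = 0 := by
  have hn : q ^ n ≠ 0 := pow_ne_zero n hq
  simp only [classicalEigenvalue, pow_succ, inv_pow]
  field_simp
  ring

namespace HasIntersectionArray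

lemma intersectionOp_inv_pow (H : HasIntersectionArray G D c a b) (hq : q ≠ 0) (n : ℕ) {i : ℕ}
    (hi : i ≤ D) :
    intersectionOp c a b ((q⁻¹ ^ ·) ^ n) i =
      (b 0 + c i * (q ^ n - 1) + b i * (q⁻¹ ^ n - 1)) * (q⁻¹ ^ i) ^ n := by
  have hsum : (c i + a i + b i : ℝ) = b 0 := by exact_mod_cast H.add_add_eq_b_zero hi
  have hpred : (c i : ℝ) * (q⁻¹ ^ (i - 1)) ^ n = c i * (q ^ n * (q⁻¹ ^ i) ^ n) := by
    cases i with
    | zero => simp [H.c_zero]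
    | succ i =>
      rw [Nat.add_sub_cancel, ← mul_pow q, pow_succ', mul_inv_cancel_left₀ hq]
  simp only [intersectionOp, Pi.pow_apply, hpred, pow_succ, mul_pow, ← hsum]
  ring

lemma adj_mul_hadamardPow_sub_smul_apply (H : HasIntersectionArray G D c a b) (hq : q ≠ 0)
    {C₀ C₁ C₂ B₀ B₁ B₂ : ℝ}
    (hc : ∀ i ≤ D, (c i : ℝ) = C₀ + C₁ * q ^ i + C₂ * (q ^ i) ^ 2)
    (hb : ∀ i ≤ D, (b i : ℝ) = B₀ + B₁ * q ^ i + B₂ * (q ^ i) ^ 2) (n : ℕ) (y z : V) :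
    (distMatrix G (Pi.single 1 1) * hadamardPow (distMatrix G (q⁻¹ ^ ·)) n -
        classicalEigenvalue q (b 0) C₀ B₀ n • hadamardPow (distMatrix G (q⁻¹ ^ ·)) n) y z =
      (q⁻¹ ^ G.dist y z) ^ n *
        ((C₁ * (q ^ n - 1) + B₁ * (q⁻¹ ^ n - 1)) * q ^ G.dist y z +
          (C₂ * (q ^ n - 1) + B₂ * (q⁻¹ ^ n - 1)) * (q ^ G.dist y z) ^ 2) := by
  rw [hadamardPow_distMatrix, H.adj_mul_distMatrix, Matrix.sub_apply, Matrix.smul_apply,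
    distMatrix_apply, distMatrix_apply, H.intersectionOp_inv_pow hq n (H.dist_le y z),
    hc _ (H.dist_le y z), hb _ (H.dist_le y z), classicalEigenvalue, smul_eq_mul, Pi.pow_apply]
  ring

/-- Multiplying by `q ^ i` lowers the exponent of `q⁻¹ ^ i` by one, so `hc` and `hb` make
multiplication by the adjacency matrix triangular on the Hadamard powers. -/
theorem isQPolynomial (H : HasIntersectionArray G D c a b) [DecidableEq V] (hq : q ≠ 0)
    {C₀ C₁ C₂ B₀ B₁ : ℝ}
    (hc : ∀ i ≤ D, (c i : ℝ) = C₀ + C₁ * q ^ i + C₂ * (q ^ i) ^ 2)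
    (hb : ∀ i ≤ D, (b i : ℝ) = B₀ + B₁ * q ^ i + q * C₂ * (q ^ i) ^ 2) :
    IsQPolynomial (distMatrix G (Pi.single 1 1)) (distMatrix G (q⁻¹ ^ ·))
      (classicalEigenvalue q (b 0) C₀ B₀) where
  isSymm_left := isSymm_distMatrix _
  isSymm_right := isSymm_distMatrix _
  hadamardPow_mem_adjoin n := H.distMatrix_mem_adjoin ((q⁻¹ ^ ·) ^ n)
  mul_hadamardPow_sub_mem n := by
    have hentry := H.adj_mul_hadamardPow_sub_smul_apply hq hc hb n
    have hterm : ∀ (s : ℝ) m, m < n → s • hadamardPow (distMatrix G (q⁻¹ ^ ·)) m ∈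
        hadamardSpan (distMatrix G (q⁻¹ ^ ·)) n := fun s m hm =>
      Submodule.smul_mem _ _ (hadamardPow_mem_hadamardSpan hm)
    have hinv (i : ℕ) : q⁻¹ ^ i * q ^ i = 1 := by rw [← mul_pow, inv_mul_cancel₀ hq, one_pow]
    set e := C₁ * (q ^ n - 1) + B₁ * (q⁻¹ ^ n - 1) with he
    set g := C₂ * (q ^ n - 1) + q * C₂ * (q⁻¹ ^ n - 1) with hg
    clear_value e g
    obtain _ | _ | n := n
    · convert Submodule.zero_mem _ using 1
      ext y z
      rw [hentry, he, hg]
      simp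
    · have hg_zero : g = 0 := by
        rw [hg]
        linear_combination C₂ * mul_inv_cancel₀ hq
      convert hterm e 0 one_pos using 1
      ext y z
      rw [hentry, hg_zero, Matrix.smul_apply, hadamardPow_distMatrix, distMatrix_apply,
        Pi.pow_apply, smul_eq_mul]
      linear_combination e * hinv (G.dist y z)
    · convert Submodule.add_mem _ (hterm e (n + 1) (by lia)) (hterm g n (by lia)) using 1
      ext y z
      rw [hentry]
      simp only [Matrix.add_apply, Matrix.smul_apply, hadamardPow_distMatrix, distMatrix_apply,
        Pi.pow_apply, smul_eq_mul]
      have h := hinv (G.dist y z)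
      generalize q⁻¹ ^ G.dist y z = t, q ^ G.dist y z = x at *
      linear_combination (e * t ^ (n + 1) + g * t ^ n * (t * x + 1)) * h

lemma exists_forall_commute_tridiagonal (H : HasIntersectionArray G D c a b) [DecidableEq V]
    (hq : 1 < |q|)
    (hc : ∀ i ≤ D, (c i : ℝ) = gaussBracket q i * (1 + α * gaussBracket q (i - 1)))
    (hb : ∀ i ≤ D, (b i : ℝ) = (gaussBracket q D - gaussBracket q i) *
      (β - α * gaussBracket q i)) :
    ∃ γ ϱ : ℝ, ∀ x : V, Commute (distMatrix G (Pi.single 1 1))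
      (tridiagonal (distMatrix G (Pi.single 1 1)) (diagonal fun v => q⁻¹ ^ G.dist x v)
        (q + q⁻¹) γ ϱ) := by
  have hq₀ : q ≠ 0 := abs_pos.mp (one_pos.trans hq)
  have hq₁ : q - 1 ≠ 0 := sub_ne_zero.mpr fun h => by simp [h] at hq
  have hgauss (i : ℕ) : gaussBracket q i = (q ^ i - 1) * (q - 1)⁻¹ := by
    rw [gaussBracket, geom_sum_eq (sub_ne_zero.mp hq₁), div_eq_mul_inv]
  have hinj : Function.Injective fun i : ℕ => q⁻¹ ^ i := fun i j h =>
    pow_right_injective₀ (one_pos.trans hq) hq.ne' (by simpa using congrArg (|·|) h)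
  set s := (q - 1)⁻¹
  have hQ := H.isQPolynomial hq₀ (C₀ := -s * (1 - α * s)) (C₁ := s * (1 - α * s) - α * s ^ 2 * q⁻¹)
    (C₂ := α * s ^ 2 * q⁻¹) (B₀ := s * q ^ D * (β + α * s))
    (B₁ := -s * (β + α * s) - α * s ^ 2 * q ^ D)
    (fun i hi => by
      rw [hc i hi]
      obtain _ | i := i
      · rw [hgauss, pow_zero]
        ring
      · rw [Nat.add_sub_cancel, hgauss, hgauss]
        field_simp
        ring)
    (fun i hi => by
      rw [hb i hi, hgauss, hgauss]
      linear_combination -α * s ^ 2 * (q ^ i) ^ 2 * mul_inv_cancel₀ hq₀)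
  have hone : (1 : Matrix V V ℝ) ∈ hadamardSpan (distMatrix G (q⁻¹ ^ ·)) (D + 1) :=
    distMatrix_single_zero H.connected ▸ H.distMatrix_mem_hadamardSpan hinj _
  exact ⟨_, _, hQ.commute_tridiagonal hone (classicalEigenvalue_recurrence hq₀ _ _ _)⟩

end HasIntersectionArray

end ClassicalQPolynomial

section ClassicalNumerics

variable {D : ℕ} {c a b : ℕ → ℕ} {q α β : ℝ}

lemma exists_intCast_eq_of_monic_quadratic {r : ℚ} {m n : ℤ} (h : r ^ 2 + m * r + n = 0) :
    ∃ z : ℤ, r = z := by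
  have hr : IsIntegral ℤ r := by
    refine ⟨.X ^ 2 + (.C m * .X + .C n), Polynomial.monic_X_pow_add
      (Polynomial.degree_linear_le.trans_lt (by norm_num)), ?_⟩
    rw [Polynomial.eval₂_add, Polynomial.eval₂_add, Polynomial.eval₂_mul, Polynomial.eval₂_X_pow,
      Polynomial.eval₂_X, Polynomial.eval₂_C, Polynomial.eval₂_C, ← add_assoc]
    exact h
  obtain ⟨z, hz⟩ := IsIntegrallyClosed.isIntegral_iff.mp hr
  exact ⟨z, hz.symm⟩

/-- The numerical constraints on a graph with classical parameters of base `q`, with `a₁ = 0`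
and `a₂ ≠ 0`. -/
structure TriangleFreeClassicalArray (q : ℝ) (c a : ℕ → ℕ) : Prop where
  a_two_pos : 0 < a 2
  c_three_pos : 0 < c 3
  a_two_eq : (a 2 : ℝ) = (1 + q) * (1 + q - c 2)
  a_three_eq : (a 3 : ℝ) = (1 + q + q ^ 2) * a 2
  c_three_eq : (c 3 : ℝ) = (1 + q + q ^ 2) * (c 2 - q)

namespace TriangleFreeClassicalArray

lemma exists_ratCast_eq (h : TriangleFreeClassicalArray q c a) : ∃ r : ℚ, q = r := by
  have ha₂ : (a 2 : ℝ) ≠ 0 := by exact_mod_cast h.a_two_pos.ne'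
  by_cases hc₂ : (c 2 : ℝ) - 1 = 0
  · have hfactor : 1 + q + q ^ 2 ≠ 0 := fun h₀ => h.c_three_pos.ne' <| by
      exact_mod_cast (by rw [h.c_three_eq, h₀, zero_mul] : (c 3 : ℝ) = 0)
    refine ⟨1 - c 3 * a 2 / a 3, ?_⟩
    push_cast
    rw [h.a_three_eq, h.c_three_eq]
    field_simp
    linear_combination hc₂
  · refine ⟨(a 3 / a 2 - a 2 - c 2) / (c 2 - 1), ?_⟩
    push_cast
    rw [eq_div_iff hc₂, h.a_three_eq, mul_div_assoc, div_self ha₂]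
    linear_combination h.a_two_eq

lemma exists_intCast_eq (h : TriangleFreeClassicalArray q c a) : ∃ z : ℤ, q = z := by
  obtain ⟨r, rfl⟩ := h.exists_ratCast_eq
  obtain ⟨z, rfl⟩ := exists_intCast_eq_of_monic_quadratic (r := r) (m := 2 - c 2)
    (n := 1 - c 2 - a 2) <| by
      have := h.a_two_eq
      rify
      linear_combination -this
  exact ⟨z, by simp⟩

lemma le_neg_two (h : TriangleFreeClassicalArray q c a) (h₀ : q ≠ 0) (h₁ : q ≠ -1) :
    q ≤ -2 := by
  have hc₃ : (0 : ℝ) < (1 + q + q ^ 2) * (c 2 - q) := by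
    exact_mod_cast h.c_three_eq ▸ Nat.cast_pos.mpr h.c_three_pos
  have ha₂ : (0 : ℝ) < (1 + q) * (1 + q - c 2) := by
    exact_mod_cast h.a_two_eq ▸ Nat.cast_pos.mpr h.a_two_pos
  have hlt : q < c 2 := sub_pos.mp (pos_of_mul_pos_right hc₃ (by nlinarith [sq_nonneg (q + 1)]))
  obtain ⟨z, rfl⟩ := h.exists_intCast_eq
  norm_cast at h₀ h₁ hlt ha₂ ⊢
  by_contra! hz
  have : 0 < 1 + z - c 2 := pos_of_mul_pos_right ha₂ (by lia)
  lia

end TriangleFreeClassicalArray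

lemma HasIntersectionArray.triangleFreeClassicalArray [Fintype V] {G : SimpleGraph V}
    (H : HasIntersectionArray G D c a b) (hD : 3 ≤ D)
    (hc : ∀ i ≤ D, (c i : ℝ) = gaussBracket q i * (1 + α * gaussBracket q (i - 1)))
    (hb : ∀ i ≤ D, (b i : ℝ) = (gaussBracket q D - gaussBracket q i) *
      (β - α * gaussBracket q i))
    (ha₁ : a 1 = 0) (ha₂ : a 2 ≠ 0) : TriangleFreeClassicalArray q c a := by
  have hsum (i : ℕ) (hi : i ≤ D) : (c i + a i + b i : ℝ) = b 0 := by
    exact_mod_cast H.add_add_eq_b_zero hi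
  have hgauss : gaussBracket q 0 = 0 ∧ gaussBracket q 1 = 1 ∧ gaussBracket q 2 = 1 + q ∧
      gaussBracket q 3 = 1 + q + q ^ 2 := by simp [gaussBracket, Finset.sum_range_succ]
  obtain ⟨g₀, g₁, g₂, g₃⟩ := hgauss
  have b₀ := hb 0 (by lia)
  have s₁ := hsum 1 (by lia)
  have s₂ := hsum 2 (by lia)
  have s₃ := hsum 3 hD
  have c₂ := hc 2 (by lia)
  have c₃ := hc 3 hD
  rw [b₀, hc 1 (by lia), hb 1 (by lia), ha₁, g₀, g₁] at s₁
  rw [b₀, c₂, hb 2 (by lia), g₀] at s₂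
  rw [b₀, c₃, hb 3 hD, g₀] at s₃
  simp only [Nat.add_one_sub_one, g₁, g₂, g₃] at s₁ s₂ s₃ c₂ c₃
  have hβ : β = 1 - α * (gaussBracket q D - 1) := by
    push_cast at s₁
    linarith
  have a₂_eq : (a 2 : ℝ) = (1 + q) * (1 + q - c 2) := by
    rw [hβ] at s₂
    linear_combination s₂ + (1 + q) * c₂
  exact
    { a_two_pos := Nat.pos_of_ne_zero ha₂
      c_three_pos := H.c_pos hD
      a_two_eq := a₂_eq
      a_three_eq := by
        rw [a₂_eq]
        rw [hβ] at s₃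
        linear_combination s₃ + (1 + q + q ^ 2) * (1 + q) * c₂
      c_three_eq := by linear_combination c₃ - (1 + q + q ^ 2) * c₂ }

end ClassicalNumerics

/-! ### Balanced sets -/

section WalkCount

variable {G : SimpleGraph V} {D : ℕ} {c a b : ℕ → ℕ}

/-- The number of walks of length `n` between two vertices at distance `i`, in a distance-regular
graph with intersection numbers `c`, `a`, `b`. -/
def walkCount (c a b : ℕ → ℕ) : ℕ → ℕ → ℝ
  | 0 => Pi.single 0 1
  | n + 1 => intersectionOp c a b (walkCount c a b n)

lemma walkCount_eq_zero_of_lt {n i : ℕ} (h : n < i) : walkCount c a b n i = 0 := by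
  induction n generalizing i with
  | zero => exact Pi.single_eq_of_ne h.ne' _
  | succ n ih =>
    rw [walkCount, intersectionOp, ih (by lia), ih (by lia), ih (by lia)]
    simp

lemma walkCount_self (n : ℕ) :
    walkCount c a b (n + 1) (n + 1) = c (n + 1) * walkCount c a b n n := by
  rw [walkCount, intersectionOp, Nat.add_sub_cancel, walkCount_eq_zero_of_lt n.lt_succ_self,
    walkCount_eq_zero_of_lt (i := n + 1 + 1) (by lia)]
  ring

namespace HasIntersectionArray

variable [Fintype V]

lemma adj_pow_eq [DecidableEq V] (H : HasIntersectionArray G D c a b) (n : ℕ) :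
    distMatrix G (Pi.single 1 1) ^ n = distMatrix G (walkCount c a b n) := by
  induction n with
  | zero => rw [pow_zero, walkCount, distMatrix_single_zero H.connected]
  | succ n ih => rw [pow_succ', ih, H.adj_mul_distMatrix, walkCount]

lemma walkCount_self_pos (H : HasIntersectionArray G D c a b) {n : ℕ} (hn : n ≤ D) :
    0 < walkCount c a b n n := by
  induction n with
  | zero => simp [walkCount]
  | succ n ih =>
    rw [walkCount_self]
    exact mul_pos (Nat.cast_pos.mpr (H.c_pos hn)) (ih (by lia))

lemma walkCount_two_one (H : HasIntersectionArray G D c a b) (ha₁ : a 1 = 0) :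
    walkCount c a b 2 1 = 0 := by
  have h₀ : walkCount c a b 1 0 = 0 := by
    simp [walkCount, intersectionOp, H.c_zero, H.a_zero]
  rw [walkCount, intersectionOp, Nat.sub_self, h₀, ha₁,
    walkCount_eq_zero_of_lt (i := 1 + 1) one_lt_two]
  simp

end HasIntersectionArray

end WalkCount

section Balanced

variable {G : SimpleGraph V} {D h : ℕ} {c a b : ℕ → ℕ} {β γ ϱ κ : ℝ} {S : V → V → Finset V}

/-- The difference `∑_{v ∈ S(y, z)} t(v) - ∑_{v ∈ S(z, y)} t(v)`. -/
def nbrSumDiff (S : V → V → Finset V) (t : V → ℝ) (y z : V) : ℝ :=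
  ∑ v ∈ S y z, t v - ∑ v ∈ S z y, t v

/-- Terwilliger's balanced set condition for the family of sets `S(y, z)` with `∂(y, z) = h`, when
the dual eigenvalue sequence is `t`. -/
def IsBalanced (G : SimpleGraph V) (S : V → V → Finset V) (t : ℕ → ℝ) (h : ℕ) (κ : ℝ) : Prop :=
  ∀ x y z : V, G.dist y z = h →
    nbrSumDiff S (fun v => t (G.dist x v)) y z = κ * (t (G.dist x y) - t (G.dist x z))

variable [Fintype V]

lemma adj_diagonal_distMatrix_sub_apply [DecidableEq V] (hG : G.Connected) (f : ℕ → ℝ)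
    (t : V → ℝ) (y z : V) :
    (distMatrix G (Pi.single 1 1) * diagonal t * distMatrix G f -
        distMatrix G f * diagonal t * distMatrix G (Pi.single 1 1)) y z =
      f (G.dist y z - 1) * nbrSumDiff (closerNbrs G) t y z
        + f (G.dist y z) * nbrSumDiff (levelNbrs G) t y z
        + f (G.dist y z + 1) * nbrSumDiff (fartherNbrs G) t y z := by
  rw [Matrix.sub_apply, adj_mul_diagonal_mul_distMatrix_apply hG,
    distMatrix_mul_diagonal_mul_adj_apply hG, nbrSumDiff, nbrSumDiff, nbrSumDiff]
  ring

namespace HasIntersectionArray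

variable [DecidableEq V] {t : V → ℝ}

lemma walkCount_three_mul_sub (H : HasIntersectionArray G D c a b)
    (hcomm : Commute (distMatrix G (Pi.single 1 1))
      (tridiagonal (distMatrix G (Pi.single 1 1)) (diagonal t) β γ ϱ)) (y z : V) :
    (walkCount c a b 3 (G.dist y z) - γ * walkCount c a b 2 (G.dist y z)
        - ϱ * walkCount c a b 1 (G.dist y z)) * (t y - t z) =
      (β + 1) * (walkCount c a b 2 (G.dist y z - 1) * nbrSumDiff (closerNbrs G) t y z
        + walkCount c a b 2 (G.dist y z) * nbrSumDiff (levelNbrs G) t y z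
        + walkCount c a b 2 (G.dist y z + 1) * nbrSumDiff (fartherNbrs G) t y z) := by
  rw [← adj_diagonal_distMatrix_sub_apply H.connected]
  set A := distMatrix G (Pi.single 1 1)
  have hmatrix : diagonal t * A ^ 3 - A ^ 3 * diagonal t
      - γ • (diagonal t * A ^ 2 - A ^ 2 * diagonal t)
      - ϱ • (diagonal t * A ^ 1 - A ^ 1 * diagonal t)
        = (β + 1) • (A * diagonal t * A ^ 2 - A ^ 2 * diagonal t * A) := by
    have h := sub_eq_zero.mpr hcomm.symm.eq
    rw [← sub_eq_zero, ← h, tridiagonal]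
    simp only [pow_succ, pow_zero, one_mul, mul_sub, sub_mul, mul_add, add_mul, mul_smul_comm,
      smul_mul_assoc, mul_assoc, smul_sub, smul_add]
    module
  have h := congrFun₂ hmatrix y z
  simp only [A, H.adj_pow_eq, Matrix.sub_apply, Matrix.smul_apply, Matrix.diagonal_mul,
    Matrix.mul_diagonal, distMatrix_apply, smul_eq_mul] at h
  simp only [A, Matrix.sub_apply]
  linear_combination h

lemma walkCount_four_mul_sub (H : HasIntersectionArray G D c a b)
    (hcomm : Commute (distMatrix G (Pi.single 1 1))
      (tridiagonal (distMatrix G (Pi.single 1 1)) (diagonal t) β γ ϱ)) (y z : V) :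
    (walkCount c a b 4 (G.dist y z) - γ * walkCount c a b 3 (G.dist y z)
        - ϱ * walkCount c a b 2 (G.dist y z)) * (t y - t z) =
      β * (walkCount c a b 3 (G.dist y z - 1) * nbrSumDiff (closerNbrs G) t y z
        + walkCount c a b 3 (G.dist y z) * nbrSumDiff (levelNbrs G) t y z
        + walkCount c a b 3 (G.dist y z + 1) * nbrSumDiff (fartherNbrs G) t y z)
      + γ * (walkCount c a b 2 (G.dist y z - 1) * nbrSumDiff (closerNbrs G) t y z
        + walkCount c a b 2 (G.dist y z) * nbrSumDiff (levelNbrs G) t y z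
        + walkCount c a b 2 (G.dist y z + 1) * nbrSumDiff (fartherNbrs G) t y z) := by
  rw [← adj_diagonal_distMatrix_sub_apply H.connected,
    ← adj_diagonal_distMatrix_sub_apply H.connected]
  set A := distMatrix G (Pi.single 1 1)
  have hmatrix : diagonal t * A ^ 4 - A ^ 4 * diagonal t
      - γ • (diagonal t * A ^ 3 - A ^ 3 * diagonal t)
      - ϱ • (diagonal t * A ^ 2 - A ^ 2 * diagonal t)
        = β • (A * diagonal t * A ^ 3 - A ^ 3 * diagonal t * A)
          + γ • (A * diagonal t * A ^ 2 - A ^ 2 * diagonal t * A) := by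
    have h := sub_eq_zero.mpr (hcomm.symm.mul_right hcomm.symm).eq
    rw [← sub_eq_zero, ← h, tridiagonal]
    simp only [pow_succ, pow_zero, one_mul, mul_sub, sub_mul, mul_add, add_mul, mul_smul_comm,
      smul_mul_assoc, mul_assoc, smul_sub, smul_add]
    module
  have h := congrFun₂ hmatrix y z
  simp only [A, H.adj_pow_eq, Matrix.sub_apply, Matrix.add_apply, Matrix.smul_apply,
    Matrix.diagonal_mul, Matrix.mul_diagonal, distMatrix_apply, smul_eq_mul] at h
  simp only [A, Matrix.sub_apply]
  linear_combination h

end HasIntersectionArray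

namespace HasIntersectionArray

variable [DecidableEq V] {t : ℕ → ℝ}

lemma exists_isBalanced_level_two (H : HasIntersectionArray G D c a b) (hD : 2 ≤ D)
    (ha₁ : a 1 = 0) (hβ : β + 1 ≠ 0)
    (hcomm : ∀ x : V, Commute (distMatrix G (Pi.single 1 1)) (tridiagonal
      (distMatrix G (Pi.single 1 1)) (diagonal fun v => t (G.dist x v)) β γ ϱ)) :
    ∃ κ, IsBalanced G (levelNbrs G) t 2 κ := by
  refine ⟨(walkCount c a b 3 2 - γ * walkCount c a b 2 2) / ((β + 1) * walkCount c a b 2 2),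
    fun x y z h => ?_⟩
  have key := H.walkCount_three_mul_sub (hcomm x) y z
  rw [h, H.walkCount_two_one ha₁, walkCount_eq_zero_of_lt (n := 1) one_lt_two,
    walkCount_eq_zero_of_lt (n := 2) (i := 2 + 1) (by lia)] at key
  have := (H.walkCount_self_pos hD).ne'
  field_simp
  linear_combination -key

lemma exists_isBalanced_closer_three (H : HasIntersectionArray G D c a b) (hD : 3 ≤ D)
    (hβ : β + 1 ≠ 0)
    (hcomm : ∀ x : V, Commute (distMatrix G (Pi.single 1 1)) (tridiagonal
      (distMatrix G (Pi.single 1 1)) (diagonal fun v => t (G.dist x v)) β γ ϱ)) :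
    ∃ κ, IsBalanced G (closerNbrs G) t 3 κ := by
  refine ⟨walkCount c a b 3 3 / ((β + 1) * walkCount c a b 2 2), fun x y z h => ?_⟩
  have key := H.walkCount_three_mul_sub (hcomm x) y z
  rw [h, walkCount_eq_zero_of_lt (n := 1) (i := 3) (by lia),
    walkCount_eq_zero_of_lt (n := 2) (i := 3) (by lia),
    walkCount_eq_zero_of_lt (n := 2) (i := 3 + 1) (by lia)] at key
  have := (H.walkCount_self_pos (show 2 ≤ D by lia)).ne'
  field_simp
  linear_combination -key

lemma exists_isBalanced_level_three (H : HasIntersectionArray G D c a b) (hD : 3 ≤ D)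
    (hβ : β ≠ 0)
    (hcomm : ∀ x : V, Commute (distMatrix G (Pi.single 1 1)) (tridiagonal
      (distMatrix G (Pi.single 1 1)) (diagonal fun v => t (G.dist x v)) β γ ϱ))
    (hκ : IsBalanced G (closerNbrs G) t 3 κ) : ∃ κ', IsBalanced G (levelNbrs G) t 3 κ' := by
  refine ⟨(walkCount c a b 4 3 - γ * walkCount c a b 3 3
    - (β * walkCount c a b 3 2 + γ * walkCount c a b 2 2) * κ) / (β * walkCount c a b 3 3),
    fun x y z h => ?_⟩
  have key := H.walkCount_four_mul_sub (hcomm x) y z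
  rw [hκ x y z h, h, walkCount_eq_zero_of_lt (n := 2) (i := 3) (by lia),
    walkCount_eq_zero_of_lt (n := 2) (i := 3 + 1) (by lia),
    walkCount_eq_zero_of_lt (n := 3) (i := 3 + 1) (by lia)] at key
  have := (H.walkCount_self_pos hD).ne'
  field_simp
  linear_combination -key

end HasIntersectionArray

lemma IsBalanced.card_mul_sub_eq {t : ℕ → ℝ} (hbal : IsBalanced G (levelNbrs G) t h κ) {n : ℕ}
    (hcard : ∀ x y : V, G.dist x y = h → (levelNbrs G x y).card = n)
    {y z : V} (hyz : G.dist y z = h) : n * (t 1 - t h) = κ * (t 0 - t h) := by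
  have key := hbal y y z hyz
  have hleft : ∀ v ∈ levelNbrs G y z, t (G.dist y v) = t 1 := fun v hv => by
    rw [SimpleGraph.dist_eq_one_iff_adj.mpr (mem_levelNbrs.mp hv).1]
  have hright : ∀ v ∈ levelNbrs G z y, t (G.dist y v) = t h := fun v hv => by
    rw [G.dist_comm, (mem_levelNbrs.mp hv).2, G.dist_comm, hyz]
  rw [nbrSumDiff, Finset.sum_congr rfl hleft, Finset.sum_congr rfl hright, Finset.sum_const,
    Finset.sum_const, hcard y z hyz, hcard z y (G.dist_comm.trans hyz), nsmul_eq_mul,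
    nsmul_eq_mul, G.dist_self, hyz] at key
  linear_combination key

end Balanced

/-- A distance-regular graph with classical parameters of base `q < -1` (negative type), `a₁ = 0`
and `a₂ ≠ 0`, described by numerical constraints and by balanced set conditions at the distances
2 and 3. -/
structure TriangleFreeNegType [Fintype V] (G : SimpleGraph V) (D : ℕ) (c a b : ℕ → ℕ) (q : ℝ) :
    Prop extends HasIntersectionArray G D c a b, TriangleFreeClassicalArray q c a where
  le_neg_two : q ≤ -2
  a_one : a 1 = 0
  isBalanced_level_two : IsBalanced G (levelNbrs G) (q⁻¹ ^ ·) 2 (a 2 / (1 + q))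
  exists_isBalanced_closer_three : ∃ κ, IsBalanced G (closerNbrs G) (q⁻¹ ^ ·) 3 κ
  isBalanced_level_three : IsBalanced G (levelNbrs G) (q⁻¹ ^ ·) 3 (a 2 * (1 + q))

theorem HasIntersectionArray.triangleFreeNegType [Fintype V] {G : SimpleGraph V} {D : ℕ}
    {c a b : ℕ → ℕ} {q α β : ℝ} (H : HasIntersectionArray G D c a b) (hD : 3 ≤ D)
    (hc : ∀ i ≤ D, (c i : ℝ) = gaussBracket q i * (1 + α * gaussBracket q (i - 1)))
    (hb : ∀ i ≤ D, (b i : ℝ) = (gaussBracket q D - gaussBracket q i) *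
      (β - α * gaussBracket q i))
    (hq₀ : q ≠ 0) (hq₁ : q ≠ -1) (ha₁ : a 1 = 0) (ha₂ : a 2 ≠ 0) :
    TriangleFreeNegType G D c a b q := by
  classical
  have N := H.triangleFreeClassicalArray hD hc hb ha₁ ha₂
  have hq := N.le_neg_two hq₀ hq₁
  obtain ⟨γ, ϱ, hcomm⟩ := H.exists_forall_commute_tridiagonal
    (by rw [abs_of_neg (by linarith)]; linarith) hc hb
  have hinv : q * (q + q⁻¹) = q ^ 2 + 1 := by field_simp
  obtain ⟨κ₂, h₂⟩ := H.exists_isBalanced_level_two (by lia) ha₁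
    (fun h => by nlinarith) hcomm
  obtain ⟨κ₃, h₃⟩ := H.exists_isBalanced_closer_three hD (fun h => by nlinarith) hcomm
  obtain ⟨κ₄, h₄⟩ := H.exists_isBalanced_level_three hD (fun h => by nlinarith) hcomm h₃
  obtain ⟨y, z, hyz⟩ := H.exists_dist_eq (show 2 ≤ D by lia)
  obtain ⟨y', z', hyz'⟩ := H.exists_dist_eq hD
  have e₂ := h₂.card_mul_sub_eq (fun x y h => h ▸ H.card_levelNbrs x y) hyz
  have e₄ := h₄.card_mul_sub_eq (fun x y h => h ▸ H.card_levelNbrs x y) hyz'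
  have hq_sub : q - 1 ≠ 0 := by linarith
  have hκ₂ : κ₂ = a 2 / (1 + q) := by
    have : 1 + q ≠ 0 := by linarith
    field_simp at e₂ ⊢
    refine mul_left_cancel₀ hq_sub ?_
    linear_combination -e₂
  have hκ₄ : κ₄ = a 2 * (1 + q) := by
    rw [N.a_three_eq] at e₄
    have : 1 + q + q ^ 2 ≠ 0 := by nlinarith
    field_simp at e₄
    refine mul_left_cancel₀ (mul_ne_zero hq_sub this) ?_
    linear_combination -e₄
  exact { H, N with
    le_neg_two := hq
    a_one := ha₁
    isBalanced_level_two := hκ₂ ▸ h₂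
    exists_isBalanced_closer_three := ⟨κ₃, h₃⟩
    isBalanced_level_three := hκ₄ ▸ h₄ }

/-! ### Weight functions of pairs of vertices -/

section TriangleFree

variable {G : SimpleGraph V} {x y z s w : V} {h : ℕ}

lemma dist_eq_two_of_adj_of_adj (hG : G.Connected) (hT : G.CliqueFree 3) (hx : G.Adj s x)
    (hy : G.Adj s y) (hxy : x ≠ y) : G.dist x y = 2 := by
  classical
  have hle := dist_le_dist_add_one_of_adj hG hx y
  have hpos := hG.pos_dist_of_ne hxy
  have hne : G.dist x y ≠ 1 := fun h =>
    hT {s, x, y} (SimpleGraph.is3Clique_triple_iff.mpr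
      ⟨hx, hy, SimpleGraph.dist_eq_one_iff_adj.mp h⟩)
  rw [SimpleGraph.dist_eq_one_iff_adj.mpr hy] at hle
  lia

variable [Fintype V]

lemma mem_closerNbrs_of_dist_eq_two (hxy : G.dist x y = 2) :
    s ∈ closerNbrs G x y ↔ G.Adj x s ∧ G.Adj s y :=
  mem_closerNbrs.trans <| and_congr_right' <| by
    rw [hxy, ← SimpleGraph.dist_eq_one_iff_adj]
    lia

lemma closerNbrs_comm_of_dist_eq_two (hxy : G.dist x y = 2) :
    closerNbrs G x y = closerNbrs G y x := by
  ext s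
  rw [mem_closerNbrs_of_dist_eq_two hxy, mem_closerNbrs_of_dist_eq_two (G.dist_comm.trans hxy),
    and_comm, G.adj_comm x, G.adj_comm s]

lemma sum_notFartherNbrs (hG : G.Connected) (x y : V) (t : V → ℝ) :
    ∑ v ∈ notFartherNbrs G x y, t v =
      ∑ v ∈ closerNbrs G x y, t v + ∑ v ∈ levelNbrs G x y, t v := by
  classical
  rw [← Finset.sum_union]
  · congr 1
    ext s
    have := fun hs : G.Adj x s => dist_le_dist_add_one_of_adj hG hs.symm y
    simp only [Finset.mem_union, mem_notFartherNbrs, mem_closerNbrs, mem_levelNbrs, ← and_or_left]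
    exact and_congr_right fun hs => by have := this hs; lia
  · exact Finset.disjoint_left.mpr fun s hs hs' => by
      have := (mem_closerNbrs.mp hs).2
      have := (mem_levelNbrs.mp hs').2
      lia

lemma card_notFartherNbrs (hG : G.Connected) (x y : V) :
    (notFartherNbrs G x y).card = (closerNbrs G x y).card + (levelNbrs G x y).card := by
  have := sum_notFartherNbrs hG x y fun _ => 1
  simp only [Finset.sum_const, nsmul_eq_mul, mul_one] at this
  exact_mod_cast this

lemma IsBalanced.sum_levelNbrs_pow (hG : G.Connected) (hT : G.CliqueFree 3) {r κ : ℝ} {n : ℕ}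
    (hr : r ^ h ≠ 1) (hcard : ∀ x y : V, G.dist x y = h → (levelNbrs G x y).card = n)
    (hbal : IsBalanced G (levelNbrs G) (r ^ ·) h κ) (hxz : G.dist x z = h) (hs : G.Adj x s)
    (hsz : G.dist s z = h + 1) :
    ∑ v ∈ levelNbrs G z x, r ^ G.dist s v = n * r ^ (h + 1) := by
  have key := hbal s x z hxz
  have hκ := hbal.card_mul_sub_eq hcard hxz
  have hleft : ∀ v ∈ levelNbrs G x z, r ^ G.dist s v = r ^ 2 := fun v hv => by
    have hv := mem_levelNbrs.mp hv
    rw [dist_eq_two_of_adj_of_adj hG hT hs hv.1]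
    rintro rfl
    lia
  rw [nbrSumDiff, Finset.sum_congr rfl hleft, Finset.sum_const, hcard x z hxz, nsmul_eq_mul, hsz,
    SimpleGraph.dist_eq_one_iff_adj.mpr hs.symm] at key
  simp only [pow_zero, pow_one] at key hκ
  refine mul_left_cancel₀ (sub_ne_zero.mpr hr.symm) ?_
  linear_combination (r - r ^ (h + 1)) * hκ - (1 - r ^ h) * key

/-- The graph contains no parallelograms of length `h + 1`. -/
lemma IsBalanced.dist_eq_add_one_of_mem_levelNbrs (hG : G.Connected) (hT : G.CliqueFree 3)
    {r κ : ℝ} {n : ℕ} (hr₀ : r ≠ 0) (hr₁ : r ≠ 1) (hr : r ^ h ≠ 1)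
    (hcard : ∀ x y : V, G.dist x y = h → (levelNbrs G x y).card = n)
    (hbal : IsBalanced G (levelNbrs G) (r ^ ·) h κ) (hxz : G.dist x z = h) (hs : G.Adj x s)
    (hsz : G.dist s z = h + 1) (hw : w ∈ levelNbrs G z x) : G.dist s w = h + 1 := by
  classical
  have hdist : ∀ v ∈ levelNbrs G z x, G.dist s v = h ∨ G.dist s v = h + 1 := fun v hv => by
    have hv := mem_levelNbrs.mp hv
    have := dist_le_dist_add_one_of_adj hG hs v
    have := dist_le_dist_add_one_of_adj hG hv.1.symm s
    have := dist_le_dist_add_one_of_adj hG hv.1 s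
    grind [SimpleGraph.dist_comm]
  have hpow : ∀ v ∈ levelNbrs G z x, r ^ G.dist s v =
      r ^ (h + 1) + r ^ h * (1 - r) * if G.dist s v = h then 1 else 0 := fun v hv => by
    obtain hv | hv := hdist v hv
    · rw [if_pos hv, hv]
      ring
    · rw [if_neg (by lia), hv, mul_zero, add_zero]
  have hsum := hbal.sum_levelNbrs_pow hG hT hr hcard hxz hs hsz
  rw [Finset.sum_congr rfl hpow, Finset.sum_add_distrib, Finset.sum_const, nsmul_eq_mul,
    hcard z x (G.dist_comm.trans hxz), add_eq_left, ← Finset.mul_sum, mul_eq_zero,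
    or_iff_right (mul_ne_zero (pow_ne_zero _ hr₀) (sub_ne_zero.mpr hr₁.symm)),
    Finset.sum_boole, Nat.cast_eq_zero, Finset.card_filter_eq_zero_iff] at hsum
  exact (hdist w hw).resolve_left (hsum w hw)

end TriangleFree

/-- The properties of the sets `C(x, y) ∪ A(x, y)` with `∂(x, y) = h` that make the weights
`pairWeight` determine a closed subgraph of valency `γ`. -/
structure IsWeightSystem [Fintype V] (G : SimpleGraph V) (t : ℕ → ℝ) (h γ : ℕ) (κ : ℝ) :
    Prop where
  connected : G.Connected
  cliqueFree : G.CliqueFree 3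
  zero_ne_two : t 0 ≠ t 2
  pos : 0 < h
  card_eq (x y : V) : G.dist x y = h → (notFartherNbrs G x y).card = γ
  isBalanced : IsBalanced G (notFartherNbrs G) t h κ
  notFartherNbrs_eq (x z z' : V) : G.dist x z = h → G.dist x z' = h → G.Adj z z' →
    notFartherNbrs G x z = notFartherNbrs G x z'
  exists_adj (x y s : V) : G.dist x y = h → G.Adj x s → G.dist s y + 1 = h →
    ∃ y', G.Adj y y' ∧ G.dist x y' = h ∧ G.dist s y' = h

section WeightSystem

variable [Fintype V] {G : SimpleGraph V} {D m : ℕ} {c a b : ℕ → ℕ} {κ : ℝ}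

lemma IsBalanced.notFartherNbrs_eq (hG : G.Connected) (hT : G.CliqueFree 3) {r : ℝ} {h n : ℕ}
    (hr₀ : r ≠ 0) (hr₁ : r ≠ 1) (hr : r ^ h ≠ 1)
    (hcard : ∀ x y : V, G.dist x y = h → (levelNbrs G x y).card = n)
    (hbal : IsBalanced G (levelNbrs G) (r ^ ·) h κ) (x z z' : V) (hz : G.dist x z = h)
    (hz' : G.dist x z' = h) (hzz' : G.Adj z z') :
    notFartherNbrs G x z = notFartherNbrs G x z' := by
  have subset (z z' : V) (hz : G.dist x z = h) (hz' : G.dist x z' = h) (hzz' : G.Adj z z') :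
      notFartherNbrs G x z ⊆ notFartherNbrs G x z' := fun s hs => by
    rw [mem_notFartherNbrs] at hs ⊢
    by_contra hn
    have hsz' := dist_le_dist_add_one_of_adj hG hs.1 z'
    have := hbal.dist_eq_add_one_of_mem_levelNbrs hG hT hr₀ hr₁ hr hcard hz' hs.1
      (by lia : G.dist s z' = h + 1) (w := z) (mem_levelNbrs.mpr ⟨hzz'.symm, by
        rw [G.dist_comm, hz, G.dist_comm, hz']⟩)
    lia
  exact (subset z z' hz hz' hzz').antisymm (subset z' z hz' hz hzz'.symm)

lemma HasIntersectionArray.exists_adj_of_lt (H : HasIntersectionArray G D c a b)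
    (ha : a m < a (m + 1)) (x y s : V) (hxy : G.dist x y = m + 1) (hs : G.Adj x s)
    (hsy : G.dist s y + 1 = m + 1) :
    ∃ y', G.Adj y y' ∧ G.dist x y' = m + 1 ∧ G.dist s y' = m + 1 := by
  rw [G.dist_comm] at hxy hsy
  have hlt : (levelNbrs G y s).card < (levelNbrs G y x).card := by
    rwa [H.card_levelNbrs, H.card_levelNbrs, hxy, Nat.add_right_cancel hsy]
  obtain ⟨y', hy', hn⟩ := Finset.exists_mem_notMem_of_card_lt_card hlt
  rw [mem_levelNbrs] at hy' hn
  have := dist_le_dist_add_one_of_adj H.connected hy'.1 s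
  have := dist_le_dist_add_one_of_adj H.connected hs.symm y'
  exact ⟨y', hy'.1, by grind [SimpleGraph.dist_comm], by grind [SimpleGraph.dist_comm]⟩

end WeightSystem

namespace TriangleFreeNegType

variable [Fintype V] {G : SimpleGraph V} {D : ℕ} {c a b : ℕ → ℕ} {q κ : ℝ}

lemma cliqueFree (H : TriangleFreeNegType G D c a b q) : G.CliqueFree 3 := by
  classical
  intro S hS
  obtain ⟨x, y, z, hxy, hxz, hyz, -⟩ := SimpleGraph.is3Clique_iff.mp hS
  have hempty : levelNbrs G x y = ∅ := by
    rw [← Finset.card_eq_zero, H.card_levelNbrs, SimpleGraph.dist_eq_one_iff_adj.mpr hxy, H.a_one]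
  refine Finset.notMem_empty z (hempty ▸ mem_levelNbrs.mpr ⟨hxz, ?_⟩)
  rw [SimpleGraph.dist_eq_one_iff_adj.mpr hxy, SimpleGraph.dist_eq_one_iff_adj.mpr hyz.symm]

lemma a_two_lt_a_three (H : TriangleFreeNegType G D c a b q) : a 2 < a 3 := by
  have hq := H.le_neg_two
  have hpos : (0 : ℝ) < a 2 := Nat.cast_pos.mpr H.a_two_pos
  have : 1 < 1 + q + q ^ 2 := by nlinarith
  exact_mod_cast (lt_mul_of_one_lt_left hpos this).trans_eq H.a_three_eq.symm

lemma card_eq (H : TriangleFreeNegType G D c a b q) (x y : V) :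
    (notFartherNbrs G x y).card = c (G.dist x y) + a (G.dist x y) := by
  rw [card_notFartherNbrs H.connected, H.card_closerNbrs, H.card_levelNbrs]

lemma isWeightSystem (H : TriangleFreeNegType G D c a b q) {m : ℕ} {κ₁ : ℝ}
    (ha : a m < a (m + 1)) (hbal : IsBalanced G (notFartherNbrs G) (q⁻¹ ^ ·) (m + 1) κ)
    (hlevel : IsBalanced G (levelNbrs G) (q⁻¹ ^ ·) (m + 1) κ₁) :
    IsWeightSystem G (q⁻¹ ^ ·) (m + 1) (c (m + 1) + a (m + 1)) κ := by
  have hq := H.le_neg_two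
  have habs : |q⁻¹| < 1 := by
    rw [abs_inv, abs_of_nonpos (by linarith)]
    exact inv_lt_one_of_one_lt₀ (by linarith)
  have hpow {n : ℕ} (hn : n ≠ 0) : q⁻¹ ^ n ≠ 1 := fun h =>
    (pow_lt_one₀ (abs_nonneg _) habs hn).ne (by rw [← abs_pow, h, abs_one])
  exact {
    connected := H.connected
    cliqueFree := H.cliqueFree
    zero_ne_two := by rw [pow_zero]; exact (hpow two_ne_zero).symm
    pos := m.succ_pos
    card_eq x y hxy := by rw [H.card_eq, hxy]
    isBalanced := hbal
    notFartherNbrs_eq := hlevel.notFartherNbrs_eq H.connected H.cliqueFree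
      (inv_ne_zero (by linarith)) (by simpa using hpow one_ne_zero) (hpow m.succ_ne_zero)
      fun x y hxy => by rw [H.card_levelNbrs, hxy]
    exists_adj := H.exists_adj_of_lt ha }

lemma isWeightSystem_two (H : TriangleFreeNegType G D c a b q) :
    IsWeightSystem G (q⁻¹ ^ ·) 2 (c 2 + a 2) (a 2 / (1 + q)) := by
  refine H.isWeightSystem (H.a_one ▸ H.a_two_pos) (fun x y z hyz => ?_) H.isBalanced_level_two
  rw [← H.isBalanced_level_two x y z hyz, nbrSumDiff, nbrSumDiff, sum_notFartherNbrs H.connected,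
    sum_notFartherNbrs H.connected, closerNbrs_comm_of_dist_eq_two hyz, add_sub_add_left_eq_sub]

lemma exists_isWeightSystem_three (H : TriangleFreeNegType G D c a b q) :
    ∃ κ, IsWeightSystem G (q⁻¹ ^ ·) 3 (c 3 + a 3) κ := by
  obtain ⟨κ, hκ⟩ := H.exists_isBalanced_closer_three
  refine ⟨κ + a 2 * (1 + q), H.isWeightSystem H.a_two_lt_a_three (fun x y z hyz => ?_)
    H.isBalanced_level_three⟩
  rw [add_mul, ← hκ x y z hyz, ← H.isBalanced_level_three x y z hyz, nbrSumDiff,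
    sum_notFartherNbrs H.connected, sum_notFartherNbrs H.connected, nbrSumDiff, nbrSumDiff,
    add_sub_add_comm]

end TriangleFreeNegType

/-! ### Closed subgraphs of diameter two -/

/-- A set `Ω` of vertices, of diameter at most `m`, that induces a regular subgraph of valency `γ`
and contains, with any `u` and `v`, all neighbors of `u` at distance at most `∂(u, v)` from `v`. -/
structure IsClosedSubgraph (G : SimpleGraph V) (Ω : Set V) (γ m : ℕ) : Prop where
  mem_of_adj (u v s : V) : u ∈ Ω → v ∈ Ω → G.Adj u s → G.dist s v ≤ G.dist u v → s ∈ Ω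
  ncard_eq (u : V) : u ∈ Ω → {v | v ∈ Ω ∧ G.Adj u v}.ncard = γ
  dist_le (u v : V) : u ∈ Ω → v ∈ Ω → G.dist u v ≤ m

/-- The vertex `v` can be reached from `u` by a walk in `G` that stays inside `S`. -/
def ReachableIn (G : SimpleGraph V) (S : Set V) : V → V → Prop :=
  Relation.ReflTransGen fun u v => G.Adj u v ∧ u ∈ S ∧ v ∈ S

section ReachableIn

variable {G : SimpleGraph V} {S : Set V} {u v x : V} {γ m : ℕ}

lemma ReachableIn.mem (h : ReachableIn G S u v) (hu : u ∈ S) : v ∈ S := by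
  cases h with
  | refl => exact hu
  | tail _ h => exact h.2.2

lemma ReachableIn.symm (h : ReachableIn G S u v) : ReachableIn G S v u :=
  Relation.ReflTransGen.mono (fun _ _ h => ⟨h.1.symm, h.2.2, h.2.1⟩) _ _ h.swap

lemma reachableIn_of_dist_le_one (hG : G.Connected) (hu : u ∈ S) (hv : v ∈ S)
    (huv : G.dist u v ≤ 1) : ReachableIn G S u v := by
  obtain h | h := Nat.le_one_iff_eq_zero_or_eq_one.mp huv
  · rw [hG.dist_eq_zero_iff.mp h]
    exact .refl
  · exact .single ⟨SimpleGraph.dist_eq_one_iff_adj.mp h, hu, hv⟩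

lemma isClosedSubgraph_setOf_reachableIn [Fintype V] (hx : x ∈ S)
    (hS : ∀ u ∈ S, {v | v ∈ S ∧ G.Adj u v}.ncard = γ)
    (hle : ∀ u ∈ S, ∀ v, ReachableIn G S u v → G.dist u v ≤ m)
    (hmem : ∀ u ∈ S, ∀ v, ReachableIn G S u v → ∀ s ∈ notFartherNbrs G u v, s ∈ S) :
    IsClosedSubgraph G {v | ReachableIn G S x v} γ m where
  mem_of_adj u v s hu hv hs hsv := by
    have huS := hu.mem hx
    have hsS := hmem u huS v (hu.symm.trans hv) s (mem_notFartherNbrs.mpr ⟨hs, hsv⟩)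
    exact hu.tail ⟨hs, huS, hsS⟩
  ncard_eq u hu := by
    have huS := hu.mem hx
    rw [← hS u huS]
    congr 1
    ext v
    exact and_congr_left fun huv => ⟨fun hv => hv.mem hx, fun hv => hu.tail ⟨huv, huS, hv⟩⟩
  dist_le u v hu hv := hle u (hu.mem hx) v (hu.symm.trans hv)

end ReachableIn

/-- The weight `∑_{s ∈ C(x, y) ∪ A(x, y)} t(∂(v, s)) - κ t(∂(v, x))` of a vertex `v`. For a weight
system it is symmetric in `x` and `y`, by the balanced condition. -/
noncomputable def pairWeight [Fintype V] (G : SimpleGraph V) (t : ℕ → ℝ) (κ : ℝ) (x y v : V) : ℝ :=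
  ∑ s ∈ notFartherNbrs G x y, t (G.dist v s) - κ * t (G.dist v x)

/-- The vertices `s` and `y` are at distance `h` and have weight function `w`. -/
def IsWeightPair [Fintype V] (G : SimpleGraph V) (t : ℕ → ℝ) (h : ℕ) (κ : ℝ) (w : V → ℝ)
    (s y : V) : Prop :=
  G.dist s y = h ∧ pairWeight G t κ s y = w

/-- The set of vertices that occur in a pair at distance `h` with weight function `w`. Its
connected components turn out to be the closed subgraphs of diameter `h`. -/
def weightSet [Fintype V] (G : SimpleGraph V) (t : ℕ → ℝ) (h : ℕ) (κ : ℝ) (w : V → ℝ) : Set V :=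
  {s | ∃ y, IsWeightPair G t h κ w s y}

namespace IsWeightSystem

variable [Fintype V] {G : SimpleGraph V} {t : ℕ → ℝ} {h γ : ℕ} {κ : ℝ} {w : V → ℝ}
  {s y y' r s' z : V}

lemma symm (K : IsWeightSystem G t h γ κ) (hw : IsWeightPair G t h κ w s y) :
    IsWeightPair G t h κ w y s := by
  obtain ⟨hsy, rfl⟩ := hw
  refine ⟨G.dist_comm.trans hsy, funext fun v => ?_⟩
  have := K.isBalanced v s y hsy
  rw [nbrSumDiff] at this
  rw [pairWeight, pairWeight]
  linear_combination -this

lemma right (K : IsWeightSystem G t h γ κ) (hw : IsWeightPair G t h κ w s y) (hy : G.Adj y y')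
    (hsy' : G.dist s y' = h) : IsWeightPair G t h κ w s y' := by
  obtain ⟨hsy, rfl⟩ := hw
  refine ⟨hsy', funext fun v => ?_⟩
  rw [pairWeight, pairWeight, K.notFartherNbrs_eq s y y' hsy hsy' hy]

lemma left (K : IsWeightSystem G t h γ κ) (hw : IsWeightPair G t h κ w s y) (hs : G.Adj s s')
    (hs'y : G.dist s' y = h) : IsWeightPair G t h κ w s' y :=
  K.symm (K.right (K.symm hw) hs (G.dist_comm.trans hs'y))

lemma weight_self (K : IsWeightSystem G t h γ κ) (hw : IsWeightPair G t h κ w s y) :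
    w s = γ * t 1 - κ * t 0 := by
  obtain ⟨hsy, rfl⟩ := hw
  have hdist : ∀ v ∈ notFartherNbrs G s y, t (G.dist s v) = t 1 := fun v hv => by
    rw [SimpleGraph.dist_eq_one_iff_adj.mpr (mem_notFartherNbrs.mp hv).1]
  rw [pairWeight, Finset.sum_congr rfl hdist, Finset.sum_const, K.card_eq s y hsy, nsmul_eq_mul,
    G.dist_self]

lemma weight_of_notMem (K : IsWeightSystem G t h γ κ) (hw : IsWeightPair G t h κ w s y)
    (hr : G.Adj s r) (hn : r ∉ notFartherNbrs G s y) : w r = γ * t 2 - κ * t 1 := by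
  obtain ⟨hsy, rfl⟩ := hw
  have hdist : ∀ v ∈ notFartherNbrs G s y, t (G.dist r v) = t 2 := fun v hv => by
    rw [dist_eq_two_of_adj_of_adj K.connected K.cliqueFree hr (mem_notFartherNbrs.mp hv).1]
    exact (ne_of_mem_of_not_mem hv hn).symm
  rw [pairWeight, Finset.sum_congr rfl hdist, Finset.sum_const, K.card_eq s y hsy, nsmul_eq_mul,
    SimpleGraph.dist_eq_one_iff_adj.mpr hr.symm]

lemma weight_of_mem (K : IsWeightSystem G t h γ κ) (hw : IsWeightPair G t h κ w s y)
    (hr : r ∈ notFartherNbrs G s y) : w r = t 0 + (γ - 1) * t 2 - κ * t 1 := by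
  classical
  obtain ⟨hsy, rfl⟩ := hw
  have hsr := (mem_notFartherNbrs.mp hr).1
  have hdist : ∀ v ∈ (notFartherNbrs G s y).erase r, t (G.dist r v) = t 2 := fun v hv => by
    obtain ⟨hne, hv⟩ := Finset.mem_erase.mp hv
    rw [dist_eq_two_of_adj_of_adj K.connected K.cliqueFree hsr (mem_notFartherNbrs.mp hv).1
      hne.symm]
  have hcard : (((notFartherNbrs G s y).erase r).card : ℝ) = γ - 1 := by
    rw [Finset.cast_card_erase_of_mem hr, K.card_eq s y hsy]
  rw [pairWeight, ← Finset.add_sum_erase _ _ hr, Finset.sum_congr rfl hdist, Finset.sum_const,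
    nsmul_eq_mul, hcard, G.dist_self, SimpleGraph.dist_eq_one_iff_adj.mpr hsr.symm]

lemma mem_weightSet_of_mem (K : IsWeightSystem G t h γ κ) (hw : IsWeightPair G t h κ w s y)
    (hr : r ∈ notFartherNbrs G s y) : r ∈ weightSet G t h κ w := by
  obtain ⟨hsr, hry⟩ := mem_notFartherNbrs.mp hr
  have hle := dist_le_dist_add_one_of_adj K.connected hsr.symm y
  rw [hw.1] at hle hry
  obtain hlt | heq := hry.lt_or_eq
  · obtain ⟨y', hyy', hsy', hry'⟩ := K.exists_adj s y r hw.1 hsr (by lia)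
    exact ⟨y', K.left (K.right hw hyy' hsy') hsr hry'⟩
  · exact ⟨y, K.left hw hsr heq⟩

/-- The weight `w` is constant on `weightSet`, but it takes different values at the neighbors of `s`
inside and outside of `notFartherNbrs G s y`. -/
lemma mem_weightSet_iff (K : IsWeightSystem G t h γ κ) (hw : IsWeightPair G t h κ w s y)
    (hr : G.Adj s r) : r ∈ weightSet G t h κ w ↔ r ∈ notFartherNbrs G s y := by
  refine ⟨fun ⟨z, hz⟩ => ?_, K.mem_weightSet_of_mem hw⟩
  by_contra hn
  obtain ⟨m, rfl⟩ := Nat.exists_eq_add_one.mpr K.pos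
  obtain ⟨p, hsp, hpy⟩ := exists_adj_dist_eq K.connected hw.1
  have hp : p ∈ notFartherNbrs G s y := mem_notFartherNbrs.mpr ⟨hsp, by rw [hw.1]; lia⟩
  obtain ⟨z', hz'⟩ := K.mem_weightSet_of_mem hw hp
  apply K.zero_ne_two
  linear_combination K.weight_self hz' - K.weight_of_mem hw hp - K.weight_self hz +
    K.weight_of_notMem hw hr hn

lemma dist_le_of_mem_weightSet (K : IsWeightSystem G t h γ κ) (hw : IsWeightPair G t h κ w s y)
    (hr : G.Adj s r) (hmem : r ∈ weightSet G t h κ w) : G.dist r y ≤ h := by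
  rw [K.mem_weightSet_iff hw hr, mem_notFartherNbrs, hw.1] at hmem
  exact hmem.2

lemma ncard_weightSet_inter (K : IsWeightSystem G t h γ κ) (hs : s ∈ weightSet G t h κ w) :
    {v | v ∈ weightSet G t h κ w ∧ G.Adj s v}.ncard = γ := by
  obtain ⟨y, hw⟩ := hs
  rw [← K.card_eq s y hw.1, ← Set.ncard_coe_finset]
  congr 1
  ext v
  refine ⟨fun ⟨hv, hsv⟩ => (K.mem_weightSet_iff hw hsv).mp hv, fun hv => ?_⟩
  have hsv := (mem_notFartherNbrs.mp hv).1
  exact ⟨(K.mem_weightSet_iff hw hsv).mpr hv, hsv⟩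

lemma reachableIn_weightSet (K : IsWeightSystem G t h γ κ) (hh : h ≤ 3)
    (hw : IsWeightPair G t h κ w s y) : ReachableIn G (weightSet G t h κ w) s y := by
  obtain ⟨m, rfl⟩ := Nat.exists_eq_add_one.mpr K.pos
  have hs : s ∈ weightSet G t (m + 1) κ w := ⟨y, hw⟩
  have hy : y ∈ weightSet G t (m + 1) κ w := ⟨s, K.symm hw⟩
  obtain ⟨p, hsp, hpy⟩ := exists_adj_dist_eq K.connected hw.1
  have hp := K.mem_weightSet_of_mem hw (mem_notFartherNbrs.mpr ⟨hsp, by rw [hw.1]; lia⟩)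
  refine .head ⟨hsp, hs, hp⟩ ?_
  obtain _ | m := m
  · exact reachableIn_of_dist_le_one K.connected hp hy (by lia)
  obtain ⟨r, hyr, hrp⟩ := exists_adj_dist_eq K.connected (G.dist_comm.trans hpy)
  have hr : r ∈ notFartherNbrs G y s := by
    have := dist_le_dist_add_one_of_adj K.connected hsp.symm r
    rw [mem_notFartherNbrs, G.dist_comm, G.dist_comm (u := y), hw.1]
    rw [G.dist_comm] at hrp
    exact ⟨hyr, by lia⟩
  have hrS := K.mem_weightSet_of_mem (K.symm hw) hr
  have hpr := reachableIn_of_dist_le_one K.connected hp hrS (by rw [G.dist_comm]; lia)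
  exact hpr.tail ⟨hyr.symm, hrS, hy⟩

lemma exists_isClosedSubgraph (K : IsWeightSystem G t h γ κ) (hh : h ≤ 3)
    (hle : ∀ w, ∀ s ∈ weightSet G t h κ w, ∀ z, ReachableIn G (weightSet G t h κ w) s z →
      G.dist s z ≤ h)
    (hmem : ∀ w, ∀ s ∈ weightSet G t h κ w, ∀ z, ReachableIn G (weightSet G t h κ w) s z →
      2 ≤ G.dist s z → ∀ u ∈ notFartherNbrs G s z, u ∈ weightSet G t h κ w)
    (hsy : G.dist s y = h) :
    ∃ Ω : Set V, s ∈ Ω ∧ y ∈ Ω ∧ IsClosedSubgraph G Ω γ h := by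
  have hw : IsWeightPair G t h κ (pairWeight G t κ s y) s y := ⟨hsy, rfl⟩
  refine ⟨_, .refl, K.reachableIn_weightSet hh hw, isClosedSubgraph_setOf_reachableIn ⟨y, hw⟩
    (fun _ => K.ncard_weightSet_inter) (hle _) fun u hu v huv r hr => ?_⟩
  obtain hlt | hge := lt_or_ge (G.dist u v) 2
  · obtain ⟨hur, hrv⟩ := mem_notFartherNbrs.mp hr
    have : r = v := by
      by_contra hne
      have hpos := K.connected.pos_dist_of_ne hne
      have huv' : G.Adj u v := SimpleGraph.dist_eq_one_iff_adj.mp (by lia)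
      have := dist_eq_two_of_adj_of_adj K.connected K.cliqueFree hur huv' hne
      lia
    exact this ▸ huv.mem hu
  · exact hmem _ u hu v huv hge r hr

end IsWeightSystem

section SphereTwo

variable [Fintype V] {G : SimpleGraph V} {n : ℕ} {u v v' : V}

/-- A double count: all neighbors of `u` that are not farther from `v` are common neighbors of `u`
and `v'`. -/
lemma notFartherNbrs_subset_closerNbrs (hG : G.Connected) (hT : G.CliqueFree 3)
    (hcard : ∀ x y : V, G.dist x y = 2 → (closerNbrs G x y).card = n) {T : Set V} (hv : v ∈ T)
    (huv' : G.dist u v' = 2) (hdist : ∀ p ∈ T, G.dist u p = 2 ∧ G.dist p v' = 2)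
    (hsub : ∀ p ∈ T, closerNbrs G p v' ⊆ closerNbrs G p u)
    (hclosed : ∀ p ∈ notFartherNbrs G v u, G.dist u p = 2 → p ∈ T) :
    notFartherNbrs G u v ⊆ closerNbrs G u v' := by
  have hadj : ∀ p ∈ T, ∀ s, G.Adj p s → G.Adj s u → G.Adj s v' := fun p hp s hps hsu => by
    obtain ⟨hup, hpv'⟩ := hdist p hp
    rw [G.dist_comm] at hup
    have heq := Finset.eq_of_subset_of_card_le (hsub p hp)
      (by rw [hcard p u hup, hcard p v' hpv'])
    exact ((mem_closerNbrs_of_dist_eq_two hpv').mp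
      (heq ▸ (mem_closerNbrs_of_dist_eq_two hup).mpr ⟨hps, hsu⟩)).2
  have huv := (hdist v hv).1
  intro g hg
  obtain ⟨hug, hgv⟩ := mem_notFartherNbrs.mp hg
  refine (mem_closerNbrs_of_dist_eq_two huv').mpr ⟨hug, ?_⟩
  have hle := dist_le_dist_add_one_of_adj hG hug.symm v
  obtain hgv1 | hgv2 : G.dist g v = 1 ∨ G.dist g v = 2 := by lia
  · exact hadj v hv g (SimpleGraph.dist_eq_one_iff_adj.mp hgv1).symm hug.symm
  · obtain ⟨p, hgp, hpv⟩ := exists_adj_dist_eq hG hgv2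
    have hvp := (SimpleGraph.dist_eq_one_iff_adj.mp hpv).symm
    have hup : G.dist u p = 2 := by
      refine dist_eq_two_of_adj_of_adj hG hT hug.symm hgp ?_
      rintro rfl
      lia
    have hp : p ∈ T := hclosed p (mem_notFartherNbrs.mpr ⟨hvp, by
      rw [G.dist_comm, hup, G.dist_comm, huv]⟩) hup
    exact hadj p hp g hgp.symm hug.symm

end SphereTwo

namespace TriangleFreeNegType

variable [Fintype V] {G : SimpleGraph V} {D γ : ℕ} {c a b : ℕ → ℕ} {q : ℝ} {u v v' : V}

lemma not_notFartherNbrs_subset_closerNbrs (H : TriangleFreeNegType G D c a b q)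
    (huv : G.dist u v = 2) (huv' : G.dist u v' = 2) :
    ¬ notFartherNbrs G u v ⊆ closerNbrs G u v' := fun hsub => by
  have hcard := Finset.card_le_card hsub
  have := H.a_two_pos
  rw [H.card_eq, H.card_closerNbrs, huv, huv'] at hcard
  lia

/-- The subgraph induced on the sphere of radius two around a vertex of a closed subgraph of
diameter two is connected. -/
lemma sphere_two_induction (H : TriangleFreeNegType G D c a b q) {Ω : Set V}
    (hΩ : IsClosedSubgraph G Ω γ 2) (hu : u ∈ Ω) (P : V → Prop)
    (hP : ∀ p ∈ Ω, ∀ p' ∈ Ω, G.dist u p = 2 → G.dist u p' = 2 → G.Adj p p' → P p → P p')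
    (hv : v ∈ Ω) (huv : G.dist u v = 2) (hPv : P v) (hv' : v' ∈ Ω) (huv' : G.dist u v' = 2) :
    P v' := by
  by_contra hPv'
  have hdist : ∀ p ∈ Ω, G.dist u p = 2 → P p → G.dist p v' = 2 := fun p hp hup hPp => by
    have hle := hΩ.dist_le p v' hp hv'
    have h₀ : G.dist p v' ≠ 0 := fun h => hPv' (H.connected.dist_eq_zero_iff.mp h ▸ hPp)
    have h₁ : G.dist p v' ≠ 1 := fun h =>
      hPv' (hP p hp v' hv' hup huv' (SimpleGraph.dist_eq_one_iff_adj.mp h) hPp)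
    lia
  refine H.not_notFartherNbrs_subset_closerNbrs huv huv' (notFartherNbrs_subset_closerNbrs
    H.connected H.cliqueFree (fun x y hxy => by rw [H.card_closerNbrs, hxy])
    (T := {p | p ∈ Ω ∧ G.dist u p = 2 ∧ P p})
    ⟨hv, huv, hPv⟩ huv' (fun p hp => ⟨hp.2.1, hdist p hp.1 hp.2.1 hp.2.2⟩) ?_ ?_)
  · rintro p ⟨hp, hup, hPp⟩ r hr
    rw [mem_closerNbrs_of_dist_eq_two (hdist p hp hup hPp)] at hr
    rw [mem_closerNbrs_of_dist_eq_two (G.dist_comm.trans hup)]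
    have hrΩ := hΩ.mem_of_adj p v' r hp hv' hr.1 (by
      rw [SimpleGraph.dist_eq_one_iff_adj.mpr hr.2, hdist p hp hup hPp]
      exact one_le_two)
    have hle := hΩ.dist_le r u hrΩ hu
    have hge := dist_le_dist_add_one_of_adj H.connected hr.1.symm u
    have hne : G.dist u r ≠ 2 := fun hur =>
      hPv' (hP r hrΩ v' hv' hur huv' hr.2 (hP p hp r hrΩ hup hur hr.1 hPp))
    rw [G.dist_comm, hup, G.dist_comm] at hge
    rw [G.dist_comm] at hle
    exact ⟨hr.1, .symm (SimpleGraph.dist_eq_one_iff_adj.mp (by lia))⟩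
  · intro p hp hup
    obtain ⟨hvp, hpu⟩ := mem_notFartherNbrs.mp hp
    have hpΩ := hΩ.mem_of_adj v u p hv hu hvp hpu
    exact ⟨hpΩ, hup, hP v hv p hpΩ huv hup hvp hPv⟩

end TriangleFreeNegType

namespace IsWeightSystem

variable [Fintype V] {G : SimpleGraph V} {t : ℕ → ℝ} {γ : ℕ} {κ : ℝ} {w : V → ℝ}
  {s y z z' : V}

lemma isWeightPair_or_dist_eq_two (K : IsWeightSystem G t 2 γ κ)
    (hw : IsWeightPair G t 2 κ w s y) (hsz' : G.dist s z' = 2) (hle : G.dist z' y ≤ 2) :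
    IsWeightPair G t 2 κ w s z' ∨ G.dist z' y = 2 := by
  obtain h | h | h : G.dist z' y = 0 ∨ G.dist z' y = 1 ∨ G.dist z' y = 2 := by lia
  · exact .inl (K.connected.dist_eq_zero_iff.mp h ▸ hw)
  · exact .inl (K.right hw (SimpleGraph.dist_eq_one_iff_adj.mp h).symm hsz')
  · exact .inr h

lemma isWeightPair_or_of_dist_eq_two (K : IsWeightSystem G t 2 γ κ)
    (hw : IsWeightPair G t 2 κ w s y) (hz' : z' ∈ weightSet G t 2 κ w) (hsz : G.Adj s z)
    (hzz' : G.Adj z z') (hsz' : G.dist s z' = 2) (hzy : G.dist z y = 2) :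
    IsWeightPair G t 2 κ w s z' ∨ IsWeightPair G t 2 κ w z' y := by
  have hzy := K.left hw hsz hzy
  have hle := K.dist_le_of_mem_weightSet hzy hzz' hz'
  exact (K.isWeightPair_or_dist_eq_two hw hsz' hle).imp_right (K.left hzy hzz')

lemma isWeightPair_or (K : IsWeightSystem G t 2 γ κ) (hw : IsWeightPair G t 2 κ w s y)
    (hz : z ∈ weightSet G t 2 κ w) (hz' : z' ∈ weightSet G t 2 κ w) (hsz : G.Adj s z)
    (hzz' : G.Adj z z') (hsz' : G.dist s z' = 2) :
    IsWeightPair G t 2 κ w s z' ∨ IsWeightPair G t 2 κ w z' y := by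
  have hle := K.dist_le_of_mem_weightSet hw hsz hz
  have hge := dist_le_dist_add_one_of_adj K.connected hsz.symm y
  rw [hw.1] at hge
  obtain hzy | hzy : G.dist z y = 1 ∨ G.dist z y = 2 := by lia
  · obtain ⟨y', hyy', hsy', hzy'⟩ := K.exists_adj s y z hw.1 hsz (by rw [hzy])
    obtain hsz'' | hz'y' :=
      K.isWeightPair_or_of_dist_eq_two (K.right hw hyy' hsy') hz' hsz hzz' hsz' hzy'
    · exact .inl hsz''
    · have hle := K.dist_le_of_mem_weightSet (K.symm hz'y') hyy'.symm ⟨s, K.symm hw⟩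
      rw [G.dist_comm] at hle
      exact (K.isWeightPair_or_dist_eq_two hw hsz' hle).imp_right (K.right hz'y' hyy'.symm)
  · exact K.isWeightPair_or_of_dist_eq_two hw hz' hsz hzz' hsz' hzy

end IsWeightSystem

namespace TriangleFreeNegType

variable [Fintype V] {G : SimpleGraph V} {D γ : ℕ} {c a b : ℕ → ℕ} {q κ : ℝ} {t : ℕ → ℝ}
  {w : V → ℝ} {x y s z z' : V}

lemma isWeightPair_two_of_adj_of_adj (H : TriangleFreeNegType G D c a b q)
    (K : IsWeightSystem G t 2 γ κ) (hs : s ∈ weightSet G t 2 κ w) (hz : z ∈ weightSet G t 2 κ w)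
    (hz' : z' ∈ weightSet G t 2 κ w) (hsz : G.Adj s z) (hzz' : G.Adj z z')
    (hsz' : G.dist s z' = 2) : IsWeightPair G t 2 κ w s z' := by
  by_contra hn
  have hpair : ∀ p, IsWeightPair G t 2 κ w s p → IsWeightPair G t 2 κ w z' p := fun p hp =>
    (K.isWeightPair_or hp hz hz' hsz hzz' hsz').resolve_left hn
  obtain ⟨y, hy⟩ := hs
  refine H.not_notFartherNbrs_subset_closerNbrs hy.1 hsz' (notFartherNbrs_subset_closerNbrs
    H.connected H.cliqueFree (fun x y hxy => by rw [H.card_closerNbrs, hxy])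
    (T := {p | IsWeightPair G t 2 κ w s p}) hy hsz'
    (fun p hp => ⟨hp.1, G.dist_comm.trans (hpair p hp).1⟩) ?_ ?_)
  · intro p hp r hr
    have hpz' := K.symm (hpair p hp)
    obtain ⟨hpr, hrz'⟩ := (mem_closerNbrs_of_dist_eq_two hpz'.1).mp hr
    have hrS := K.mem_weightSet_of_mem hpz' (r := r) (mem_notFartherNbrs.mpr ⟨hpr, by
      rw [SimpleGraph.dist_eq_one_iff_adj.mpr hrz', hpz'.1]
      exact one_le_two⟩)
    have hle := K.dist_le_of_mem_weightSet (K.symm hp) hpr hrS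
    have hge := dist_le_dist_add_one_of_adj H.connected hpr.symm s
    rw [(K.symm hp).1] at hge
    have hne : G.dist r s ≠ 2 := fun hrs =>
      hn (K.right (K.right hp hpr (G.dist_comm.trans hrs)) hrz' hsz')
    exact (mem_closerNbrs_of_dist_eq_two (K.symm hp).1).mpr
      ⟨hpr, SimpleGraph.dist_eq_one_iff_adj.mp (by lia)⟩
  · intro p hp hsp
    exact K.right hy (mem_notFartherNbrs.mp hp).1 hsp

lemma dist_le_two_and_isWeightPair_of_reachableIn (H : TriangleFreeNegType G D c a b q)
    (K : IsWeightSystem G t 2 γ κ) (hs : s ∈ weightSet G t 2 κ w)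
    (hsz : ReachableIn G (weightSet G t 2 κ w) s z) :
    G.dist s z ≤ 2 ∧ (G.dist s z = 2 → IsWeightPair G t 2 κ w s z) := by
  induction hsz with
  | refl => simp
  | @tail z z' _ hadj ih =>
    obtain ⟨hzz', hz, hz'⟩ := hadj
    have hle := dist_le_dist_add_one_of_adj H.connected hzz' s
    rw [G.dist_comm, G.dist_comm (u := z)] at hle
    obtain hlt | heq := ih.1.lt_or_eq
    · exact ⟨by lia, fun hsz' => H.isWeightPair_two_of_adj_of_adj K hs hz hz'
        (SimpleGraph.dist_eq_one_iff_adj.mp (by lia)) hzz' hsz'⟩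
    · have hsz := ih.2 heq
      have hle := K.dist_le_of_mem_weightSet (K.symm hsz) hzz' hz'
      exact ⟨G.dist_comm.trans_le hle, K.right hsz hzz'⟩

theorem exists_isClosedSubgraph_two (H : TriangleFreeNegType G D c a b q)
    (hxy : G.dist x y = 2) :
    ∃ Ω : Set V, x ∈ Ω ∧ y ∈ Ω ∧ IsClosedSubgraph G Ω (c 2 + a 2) 2 := by
  have K := H.isWeightSystem_two
  refine K.exists_isClosedSubgraph (by lia) (fun w s hs z hsz => ?_)
    (fun w s hs z hsz hge u hu => ?_) hxy
  · exact (H.dist_le_two_and_isWeightPair_of_reachableIn K hs hsz).1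
  · obtain ⟨hle, hw⟩ := H.dist_le_two_and_isWeightPair_of_reachableIn K hs hsz
    exact K.mem_weightSet_of_mem (hw (hle.antisymm hge)) hu

end TriangleFreeNegType

/-! ### Closed subgraphs of diameter three -/

namespace IsClosedSubgraph

variable {G : SimpleGraph V} {Ω : Set V} {γ : ℕ} {r s v y z : V}

lemma dist_eq_three (hΩ : IsClosedSubgraph G Ω γ 2) (hG : G.Connected) (hv : v ∈ Ω) (hz : z ∉ Ω)
    (hvz : G.Adj v z) (hy : y ∈ Ω) (hvy : G.dist v y = 2) : G.dist z y = 3 := by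
  have hle := dist_le_dist_add_one_of_adj hG hvz y
  by_contra hne
  exact hz (hΩ.mem_of_adj v y z hv hy hvz (by lia))

lemma notMem_of_dist_eq_three (hΩ : IsClosedSubgraph G Ω γ 2) (hs : s ∈ Ω)
    (hsz : G.dist s z = 3) : z ∉ Ω := fun hz => by
  have := hΩ.dist_le s z hs hz
  lia

lemma dist_eq_three_of_mem_levelNbrs [Fintype V] (hΩ : IsClosedSubgraph G Ω γ 2)
    (hG : G.Connected) (hs : s ∈ Ω) (hr : r ∈ Ω) (hsr : G.dist s r = 2) (hz : z ∉ Ω)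
    (hrz : G.Adj r z) (hv : v ∈ levelNbrs G s r) : G.dist z v = 3 := by
  rw [mem_levelNbrs, hsr] at hv
  have hvΩ := hΩ.mem_of_adj s r v hs hr hv.1 (by lia)
  exact hΩ.dist_eq_three hG hr hz hrz hvΩ (G.dist_comm.trans hv.2)

end IsClosedSubgraph

namespace TriangleFreeNegType

variable [Fintype V] {G : SimpleGraph V} {D γ γ₁ γ₂ : ℕ} {c a b : ℕ → ℕ} {q κ : ℝ} {t : ℕ → ℝ}
  {w : V → ℝ} {Ω Ω' : Set V} {r r' s u z z' : V}

lemma isWeightPair_of_dist_eq_two (H : TriangleFreeNegType G D c a b q)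
    (K : IsWeightSystem G t 3 γ κ) (hΩ : IsClosedSubgraph G Ω γ₁ 2)
    (hw : IsWeightPair G t 3 κ w s z) (hrz : G.Adj r z) (hs : s ∈ Ω) (hr : r ∈ Ω)
    (hsr : G.dist s r = 2) (hu : u ∈ Ω) (hru : G.dist r u = 2) : IsWeightPair G t 3 κ w u z := by
  have hz := hΩ.notMem_of_dist_eq_three hs hw.1
  refine H.sphere_two_induction hΩ hr (IsWeightPair G t 3 κ w · z) ?_ hs (G.dist_comm.trans hsr) hw
    hu hru
  intro p _ p' hp' _ hrp' hadj hp
  exact K.left hp hadj (G.dist_comm.trans (hΩ.dist_eq_three H.connected hr hz hrz hp' hrp'))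

lemma isWeightPair_of_isClosedSubgraph (H : TriangleFreeNegType G D c a b q)
    (K : IsWeightSystem G t 3 γ κ) (hΩ : IsClosedSubgraph G Ω γ₁ 2)
    (hΩ' : IsClosedSubgraph G Ω' γ₂ 2) (hw : IsWeightPair G t 3 κ w s z) (hrz : G.Adj r z)
    (hs : s ∈ Ω) (hr : r ∈ Ω) (hsr : G.dist s r = 2) (hrr' : G.Adj r r') (hr' : r' ∈ Ω)
    (hr'Ω' : r' ∈ Ω') (hz : z ∈ Ω') (hz' : z' ∈ Ω') (hrz' : G.Adj r z') (hne : z' ≠ r') :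
    IsWeightPair G t 3 κ w s z' := by
  have hr's : r' ≠ s := by
    rintro rfl
    rw [SimpleGraph.dist_eq_one_iff_adj.mpr hrr'.symm] at hsr
    lia
  obtain ⟨n, hn⟩ := Nat.exists_eq_add_one.mpr (H.connected.pos_dist_of_ne hr's)
  obtain ⟨u, hr'u, hus⟩ := exists_adj_dist_eq H.connected hn
  have hu : u ∈ Ω := hΩ.mem_of_adj r' s u hr' hs hr'u (by lia)
  have hru : G.dist r u = 2 := by
    refine dist_eq_two_of_adj_of_adj H.connected H.cliqueFree hrr'.symm hr'u ?_
    rintro rfl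
    have := hΩ.dist_le r' s hr' hs
    rw [G.dist_comm] at hus
    lia
  have huz := H.isWeightPair_of_dist_eq_two K hΩ hw hrz hs hr hsr hu hru
  have huΩ' : u ∉ Ω' := hΩ'.notMem_of_dist_eq_three hz (G.dist_comm.trans huz.1)
  have hr'z : G.dist r' z = 2 := dist_eq_two_of_adj_of_adj H.connected H.cliqueFree hrr' hrz
    (ne_of_mem_of_not_mem hr' (hΩ.notMem_of_dist_eq_three hs hw.1))
  have hr'z' : G.dist r' z' = 2 :=
    dist_eq_two_of_adj_of_adj H.connected H.cliqueFree hrr' hrz' hne.symm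
  have huz' : IsWeightPair G t 3 κ w u z' := by
    refine H.sphere_two_induction hΩ' hr'Ω' (IsWeightPair G t 3 κ w u ·) ?_ hz hr'z huz hz' hr'z'
    intro p _ p' hp' _ hr'p' hadj hp
    exact K.right hp hadj (hΩ'.dist_eq_three H.connected hr'Ω' huΩ' hr'u hp' hr'p')
  exact H.isWeightPair_of_dist_eq_two K hΩ huz' hrz' hu hr (G.dist_comm.trans hru) hs
    (G.dist_comm.trans hsr)

end TriangleFreeNegType

/-- The vertices `s` and `r` are at distance two, and a neighbor of `r` completes `s` to a pair of
vertices at distance three with weight function `w`. -/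
def ExtendsToWeightPair [Fintype V] (G : SimpleGraph V) (t : ℕ → ℝ) (κ : ℝ) (w : V → ℝ)
    (s r : V) : Prop :=
  G.dist s r = 2 ∧ ∃ y, IsWeightPair G t 3 κ w s y ∧ G.Adj r y

namespace ExtendsToWeightPair

variable [Fintype V] {G : SimpleGraph V} {t : ℕ → ℝ} {γ : ℕ} {κ : ℝ} {w : V → ℝ} {r s u : V}

lemma symm (h : ExtendsToWeightPair G t κ w s r) (K : IsWeightSystem G t 3 γ κ) :
    ExtendsToWeightPair G t κ w r s := by
  obtain ⟨hsr, y, hw, hry⟩ := h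
  have hrs := G.dist_comm.trans hsr
  obtain ⟨s', hss', hys', hrs'⟩ := K.exists_adj y s r (K.symm hw).1 hry.symm (by rw [hrs])
  exact ⟨hrs, s', K.left (K.right (K.symm hw) hss' hys') hry.symm hrs', hss'⟩

lemma mem_weightSet (h : ExtendsToWeightPair G t κ w s r) (K : IsWeightSystem G t 3 γ κ)
    (hu : u ∈ notFartherNbrs G s r) : u ∈ weightSet G t 3 κ w := by
  obtain ⟨hsr, y, hw, hry⟩ := h
  rw [mem_notFartherNbrs] at hu
  refine K.mem_weightSet_of_mem hw (mem_notFartherNbrs.mpr ⟨hu.1, ?_⟩)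
  have := dist_le_dist_add_one_of_adj K.connected hry u
  rw [hw.1]
  grind [SimpleGraph.dist_comm]

end ExtendsToWeightPair

lemma sum_eq_card_mul_add_card_filter_mul {ι : Type*} (S : Finset ι) {f : ι → ℝ} {P : ι → Prop}
    [DecidablePred P] {A B : ℝ} (hA : ∀ v ∈ S, P v → f v = A) (hB : ∀ v ∈ S, ¬ P v → f v = B) :
    ∑ v ∈ S, f v = S.card * B + (S.filter P).card * (A - B) := by
  have hf : ∀ v ∈ S, f v = B + (A - B) * if P v then 1 else 0 := fun v hv => by
    split_ifs with h
    · rw [hA v hv h]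
      ring
    · rw [hB v hv h, mul_zero, add_zero]
  rw [Finset.sum_congr rfl hf, Finset.sum_add_distrib, ← Finset.mul_sum, Finset.sum_boole,
    Finset.sum_const, nsmul_eq_mul]
  ring

namespace IsWeightSystem

variable [Fintype V] {G : SimpleGraph V} {t : ℕ → ℝ} {γ : ℕ} {κ : ℝ} {w : V → ℝ}
  {r s v y z' : V}

lemma isWeightPair_or_of_notMem_levelNbrs (K : IsWeightSystem G t 3 γ κ)
    (hw : IsWeightPair G t 3 κ w s y) (hry : G.Adj r y) (hsr : G.dist s r = 2)
    (hz' : z' ∈ weightSet G t 3 κ w) (hrz' : G.Adj r z') (hsz' : G.dist s z' = 3)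
    (hv : v ∈ levelNbrs G s y) (hvr : v ∉ levelNbrs G s r) :
    IsWeightPair G t 3 κ w s z' ∨ G.dist z' v = 2 := by
  rw [mem_levelNbrs, hw.1] at hv
  rw [mem_levelNbrs, hsr] at hvr
  have hr3 : G.dist r v = 3 := by
    have := dist_le_dist_add_one_of_adj K.connected hv.1 r
    have := dist_le_dist_add_one_of_adj K.connected hry v
    grind [SimpleGraph.dist_comm]
  have hrv : IsWeightPair G t 3 κ w r v := K.left (K.symm (K.left hw hv.1 hv.2)) hry.symm hr3
  have hle := K.dist_le_of_mem_weightSet hrv hrz' hz'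
  have hge := dist_le_dist_add_one_of_adj K.connected hv.1.symm z'
  rw [hsz', G.dist_comm] at hge
  obtain h | h : G.dist z' v = 3 ∨ G.dist z' v = 2 := by lia
  · exact .inl (K.symm (K.right (K.left hrv hrz' h) hv.1.symm (G.dist_comm.trans hsz')))
  · exact .inr h

lemma isWeightPair_or_of_mem_levelNbrs (K : IsWeightSystem G t 3 γ κ)
    (hw : IsWeightPair G t 3 κ w s y) (hyz' : G.dist y z' = 2) (hsz' : G.dist s z' = 3)
    (hv : v ∈ levelNbrs G y s) :
    IsWeightPair G t 3 κ w s z' ∨ G.dist z' v = 2 ∨ G.dist z' v = 3 := by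
  rw [mem_levelNbrs, (K.symm hw).1] at hv
  have hle := dist_le_dist_add_one_of_adj K.connected hv.1 z'
  have hge := dist_le_dist_add_one_of_adj K.connected hv.1.symm z'
  rw [G.dist_comm (u := v)] at hle hge
  obtain h | h | h : G.dist z' v = 1 ∨ G.dist z' v = 2 ∨ G.dist z' v = 3 := by lia
  · exact .inl (K.right (K.right hw hv.1 (G.dist_comm.trans hv.2))
      (SimpleGraph.dist_eq_one_iff_adj.mp h).symm hsz')
  · exact .inr (.inl h)
  · exact .inr (.inr h)

end IsWeightSystem

namespace TriangleFreeNegType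

variable [Fintype V] {G : SimpleGraph V} {D γ : ℕ} {c a b : ℕ → ℕ} {q κ : ℝ} {t : ℕ → ℝ}
  {w : V → ℝ} {Ω : Set V} {r s u y z : V}

open Classical in
lemma card_filter_levelNbrs_eq (H : TriangleFreeNegType G D c a b q) (hsy : G.dist s y = 3)
    (hsz : G.dist z s = 3) (hyz : G.dist z y = 2)
    (hs : ∀ v ∈ levelNbrs G s y, G.dist z v = 2 ∨ G.dist z v = 3)
    (hcard : {v ∈ levelNbrs G s y | G.dist z v = 3}.card = a 2)
    (hy : ∀ v ∈ levelNbrs G y s, G.dist z v = 2 ∨ G.dist z v = 3) :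
    ({v ∈ levelNbrs G y s | G.dist z v = 2}.card : ℝ) = a 2 * (1 + q) ^ 2 := by
  have hbal := H.isBalanced_level_three z s y hsy
  have hsum_s := sum_eq_card_mul_add_card_filter_mul (levelNbrs G s y)
    (f := fun v => q⁻¹ ^ G.dist z v) (fun v _ h => congrArg (q⁻¹ ^ ·) h)
    (fun v hv h => congrArg (q⁻¹ ^ ·) ((hs v hv).resolve_right h))
  have hsum_y := sum_eq_card_mul_add_card_filter_mul (levelNbrs G y s)
    (f := fun v => q⁻¹ ^ G.dist z v) (fun v _ h => congrArg (q⁻¹ ^ ·) h)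
    (fun v hv h => congrArg (q⁻¹ ^ ·) ((hy v hv).resolve_left h))
  rw [H.card_levelNbrs, hsy, hcard] at hsum_s
  rw [H.card_levelNbrs, G.dist_comm, hsy] at hsum_y
  rw [nbrSumDiff, hsum_s, hsum_y, hsz, hyz] at hbal
  have hq := H.le_neg_two
  have hq₀ : q⁻¹ ≠ 0 := inv_ne_zero (by linarith)
  have hq₁ : 1 - q⁻¹ ≠ 0 := sub_ne_zero.mpr fun h => by
    have := inv_eq_one.mp h.symm
    linarith
  refine mul_right_cancel₀ (mul_ne_zero (pow_ne_zero 2 hq₀) hq₁) ?_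
  linear_combination (q⁻¹ ^ 2 * (1 - q⁻¹)) * H.a_three_eq - hbal

lemma eq_neg_two_of_card_eq (H : TriangleFreeNegType G D c a b q) {S : Finset V}
    (hS : S ⊆ levelNbrs G y z) (hyz : G.dist y z = 2) (hcard : (S.card : ℝ) = a 2 * (1 + q) ^ 2) :
    q = -2 ∧ S = levelNbrs G y z := by
  have hq := H.le_neg_two
  have hpos : (0 : ℝ) < a 2 := Nat.cast_pos.mpr H.a_two_pos
  have hlevel : (levelNbrs G y z).card = a 2 := by rw [H.card_levelNbrs, hyz]
  have hle : (S.card : ℝ) ≤ a 2 := Nat.cast_le.mpr (hlevel ▸ Finset.card_le_card hS)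
  have hsq : (1 + q) ^ 2 ≤ 1 := le_of_mul_le_mul_left (by linarith) hpos
  obtain rfl : q = -2 := by nlinarith
  refine ⟨rfl, Finset.eq_of_subset_of_card_le hS (hlevel.trans ?_).le⟩
  exact_mod_cast (by linarith : (a 2 : ℝ) = S.card)

lemma isWeightPair_or_eq_neg_two (H : TriangleFreeNegType G D c a b q)
    (K : IsWeightSystem G t 3 γ κ) (hw : IsWeightPair G t 3 κ w s y) (hry : G.Adj r y)
    (hsr : G.dist s r = 2) (hz : z ∈ weightSet G t 3 κ w) (hrz : G.Adj r z)
    (hsz : G.dist s z = 3) (hyz : G.dist y z = 2) :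
    IsWeightPair G t 3 κ w s z ∨ q = -2 ∧ levelNbrs G y z ⊆ levelNbrs G y s := by
  classical
  refine or_iff_not_imp_left.mpr fun hn => ?_
  obtain ⟨Ω, hs, hr, hΩ⟩ := H.exists_isClosedSubgraph_two hsr
  have hdist {p : V} (hsp : G.dist s p = 3) (hrp : G.Adj r p) {v : V}
      (hv : v ∈ levelNbrs G s r) : G.dist p v = 3 :=
    hΩ.dist_eq_three_of_mem_levelNbrs H.connected hs hr hsr
      (hΩ.notMem_of_dist_eq_three hs hsp) hrp hv
  have hs_two : ∀ v ∈ levelNbrs G s y, v ∉ levelNbrs G s r → G.dist z v = 2 := fun v hv hvr =>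
    (K.isWeightPair_or_of_notMem_levelNbrs hw hry hsr hz hrz hsz hv hvr).resolve_left hn
  have hfilter : {v ∈ levelNbrs G s y | G.dist z v = 3} = levelNbrs G s r := by
    ext v
    rw [Finset.mem_filter]
    refine ⟨fun ⟨hv, hzv⟩ => of_not_not fun hvr => ?_, fun hv => ⟨?_, hdist hsz hrz hv⟩⟩
    · rw [hs_two v hv hvr] at hzv
      lia
    · rw [mem_levelNbrs, hw.1, G.dist_comm]
      exact ⟨(mem_levelNbrs.mp hv).1, hdist hw.1 hry hv⟩
  have hcard := H.card_filter_levelNbrs_eq hw.1 (G.dist_comm.trans hsz) (G.dist_comm.trans hyz)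
    (fun v hv => (em (v ∈ levelNbrs G s r)).symm.imp (hs_two v hv) (hdist hsz hrz))
    (by rw [hfilter, H.card_levelNbrs, hsr])
    fun v hv => (K.isWeightPair_or_of_mem_levelNbrs hw hyz hsz hv).resolve_left hn
  have hsub : {v ∈ levelNbrs G y s | G.dist z v = 2} ⊆ levelNbrs G y z := fun v hv => by
    obtain ⟨hv, hzv⟩ := Finset.mem_filter.mp hv
    rw [mem_levelNbrs, hyz, G.dist_comm]
    exact ⟨(mem_levelNbrs.mp hv).1, hzv⟩
  obtain ⟨hq, heq⟩ := H.eq_neg_two_of_card_eq hsub hyz hcard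
  exact ⟨hq, heq ▸ Finset.filter_subset _ _⟩

lemma isWeightPair_of_dist_ne_three (H : TriangleFreeNegType G D c a b q)
    (K : IsWeightSystem G t 3 γ κ) (hw : IsWeightPair G t 3 κ w s y) (hry : G.Adj r y)
    (hsr : G.dist s r = 2) (hrz : G.Adj r z) (hsz : G.dist s z = 3)
    {n : ℕ} (hΩ : IsClosedSubgraph G Ω n 2) (hy : y ∈ Ω) (hz : z ∈ Ω) (hu : u ∈ Ω)
    (hru : G.Adj r u) (hsu : G.dist s u ≠ 3) : IsWeightPair G t 3 κ w s z := by
  have hs : s ∉ Ω := hΩ.notMem_of_dist_eq_three hy (K.symm hw).1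
  have hle := dist_le_dist_add_one_of_adj H.connected hru s
  have hge := dist_le_dist_add_one_of_adj H.connected hru.symm s
  have huy : u ≠ y := by
    rintro rfl
    exact hsu hw.1
  have huz : u ≠ z := by
    rintro rfl
    exact hsu hsz
  rw [G.dist_comm, G.dist_comm (u := r), hsr] at hle
  rw [G.dist_comm, G.dist_comm (u := u), hsr] at hge
  obtain h | h : G.dist s u = 1 ∨ G.dist s u = 2 := by lia
  · have hus := (SimpleGraph.dist_eq_one_iff_adj.mp h).symm
    refine H.sphere_two_induction hΩ hu (IsWeightPair G t 3 κ w s ·) ?_ hy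
      (dist_eq_two_of_adj_of_adj H.connected H.cliqueFree hru hry huy) hw hz
      (dist_eq_two_of_adj_of_adj H.connected H.cliqueFree hru hrz huz)
    intro p _ p' hp' _ hup' hadj hp
    exact K.right hp hadj (hΩ.dist_eq_three H.connected hu hs hus hp' hup')
  · obtain ⟨Ω', hsΩ', hrΩ', hΩ'⟩ := H.exists_isClosedSubgraph_two hsr
    have huΩ' := hΩ'.mem_of_adj r s u hrΩ' hsΩ' hru (by rw [G.dist_comm, h, G.dist_comm, hsr])
    exact H.isWeightPair_of_isClosedSubgraph K hΩ' hΩ hw hry hsΩ' hrΩ' hsr hru huΩ' hu hy hz hrz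
      huz.symm

lemma sum_notFartherNbrs_le (H : TriangleFreeNegType G D c a b (-2)) (hsy : G.dist s y = 3)
    (hyz : G.dist y z = 2) (hsub : levelNbrs G y z ⊆ levelNbrs G y s) :
    ∑ v ∈ notFartherNbrs G y z, (-2 : ℝ)⁻¹ ^ G.dist s v ≤ c 2 * (-2 : ℝ)⁻¹ ^ 2 +
      a 2 * (-2 : ℝ)⁻¹ ^ 3 := by
  rw [G.dist_comm] at hsy
  have hlevel : ∀ v ∈ levelNbrs G y z, (-2 : ℝ)⁻¹ ^ G.dist s v = (-2 : ℝ)⁻¹ ^ 3 := fun v hv => by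
    rw [G.dist_comm, (mem_levelNbrs.mp (hsub hv)).2, hsy]
  have hcloser : ∀ v ∈ closerNbrs G y z, (-2 : ℝ)⁻¹ ^ G.dist s v ≤ (-2 : ℝ)⁻¹ ^ 2 := fun v hv => by
    have hyv := (mem_closerNbrs.mp hv).1
    have hle := dist_le_dist_add_one_of_adj H.connected hyv s
    have hge := dist_le_dist_add_one_of_adj H.connected hyv.symm s
    rw [hsy, G.dist_comm] at hle hge
    obtain h | h | h : G.dist s v = 2 ∨ G.dist s v = 3 ∨ G.dist s v = 4 := by lia
    all_goals norm_num [h]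
  have := Finset.sum_le_card_nsmul _ _ _ hcloser
  rw [H.card_closerNbrs, hyz, nsmul_eq_mul] at this
  rw [sum_notFartherNbrs H.connected, Finset.sum_congr rfl hlevel, Finset.sum_const,
    H.card_levelNbrs, hyz, nsmul_eq_mul]
  exact add_le_add_left this _

lemma exists_adj_dist_ne_three (H : TriangleFreeNegType G D c a b (-2)) (hsy : G.dist s y = 3)
    (hsr : G.dist s r = 2) (hyz : G.dist y z = 2) (hry : G.Adj r y) (hrz : G.Adj r z)
    (hsub : levelNbrs G y z ⊆ levelNbrs G y s) {n : ℕ} (hΩ : IsClosedSubgraph G Ω n 2)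
    (hy : y ∈ Ω) (hz : z ∈ Ω) : ∃ u ∈ Ω, G.Adj r u ∧ G.dist s u ≠ 3 := by
  have K := H.isWeightSystem_two
  obtain ⟨o, hzo, hyo, hro⟩ := K.exists_adj y z r hyz hry.symm
    (by rw [SimpleGraph.dist_eq_one_iff_adj.mpr hrz])
  have hr : r ∈ Ω := hΩ.mem_of_adj y z r hy hz hry.symm (by
    rw [SimpleGraph.dist_eq_one_iff_adj.mpr hrz, hyz]
    exact one_le_two)
  have ho : o ∈ Ω := hΩ.mem_of_adj z y o hz hy hzo (by rw [G.dist_comm, hyo, G.dist_comm, hyz])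
  by_contra! hn
  have hsum : ∀ v ∈ notFartherNbrs G r o, (-2 : ℝ)⁻¹ ^ G.dist s v = (-2 : ℝ)⁻¹ ^ 3 :=
    fun v hv => by
      obtain ⟨hrv, hvo⟩ := mem_notFartherNbrs.mp hv
      rw [hn v (hΩ.mem_of_adj r o v hr ho hrv hvo) hrv]
  have hweight := congrFun (K.left (K.right ⟨hyz, rfl⟩ hzo hyo) hry.symm hro).2 s
  rw [pairWeight, pairWeight, hsr, hsy, Finset.sum_congr rfl hsum, Finset.sum_const,
    K.card_eq r o hro, nsmul_eq_mul] at hweight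
  have hle := H.sum_notFartherNbrs_le hsy hyz hsub
  have ha := H.a_two_eq
  norm_num at hweight hle ha
  linarith

end TriangleFreeNegType

namespace ExtendsToWeightPair

variable [Fintype V] {G : SimpleGraph V} {D γ γ₁ : ℕ} {c a b : ℕ → ℕ} {q κ : ℝ} {t : ℕ → ℝ}
  {w : V → ℝ} {Ω : Set V} {r r' s u z : V}

lemma isWeightPair (h : ExtendsToWeightPair G t κ w s r)
    (H : TriangleFreeNegType G D c a b q) (K : IsWeightSystem G t 3 γ κ)
    (hz : z ∈ weightSet G t 3 κ w) (hrz : G.Adj r z) (hsz : G.dist s z = 3) :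
    IsWeightPair G t 3 κ w s z := by
  obtain ⟨hsr, y, hw, hry⟩ := h
  obtain rfl | hne := eq_or_ne y z
  · exact hw
  have hyz := dist_eq_two_of_adj_of_adj H.connected H.cliqueFree hry hrz hne
  obtain hsz' | ⟨rfl, hsub⟩ := H.isWeightPair_or_eq_neg_two K hw hry hsr hz hrz hsz hyz
  · exact hsz'
  obtain ⟨Ω, hyΩ, hzΩ, hΩ⟩ := H.exists_isClosedSubgraph_two hyz
  obtain ⟨u, hu, hru, hsu⟩ := H.exists_adj_dist_ne_three hw.1 hsr hyz hry hrz hsub hΩ hyΩ hzΩ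
  exact H.isWeightPair_of_dist_ne_three K hw hry hsr hrz hsz hΩ hyΩ hzΩ hu hru hsu

lemma of_dist_eq_two (h : ExtendsToWeightPair G t κ w s r) (H : TriangleFreeNegType G D c a b q)
    (K : IsWeightSystem G t 3 γ κ) (hΩ : IsClosedSubgraph G Ω γ₁ 2) (hs : s ∈ Ω) (hr : r ∈ Ω)
    (hr' : r' ∈ Ω) (hsr' : G.dist s r' = 2) : ExtendsToWeightPair G t κ w s r' := by
  obtain ⟨hrs, s', hw, hss'⟩ := h.symm K
  have hr's' := H.isWeightPair_of_dist_eq_two K hΩ hw hss' hr hs hrs hr' hsr'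
  exact symm ⟨G.dist_comm.trans hsr', s', hr's', hss'⟩ K

lemma exists_of_adj (h : ExtendsToWeightPair G t κ w s r) (H : TriangleFreeNegType G D c a b q)
    (K : IsWeightSystem G t 3 γ κ) (hΩ : IsClosedSubgraph G Ω γ₁ 2) (hs : s ∈ Ω) (hr : r ∈ Ω)
    (hu : u ∈ Ω) (hsu : G.Adj s u) : ∃ v ∈ Ω, ExtendsToWeightPair G t κ w u v := by
  obtain ⟨v, hv, hsv, huv⟩ : ∃ v ∈ Ω, G.dist s v = 2 ∧ G.dist u v = 2 := by
    have hle := hΩ.dist_le u r hu hr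
    have hge := dist_le_dist_add_one_of_adj H.connected hsu.symm r
    rw [h.1] at hge
    obtain h₁ | h₂ : G.dist u r = 1 ∨ G.dist u r = 2 := by lia
    · obtain ⟨v, hrv, hsv, huv⟩ := H.isWeightSystem_two.exists_adj s r u h.1 hsu (by rw [h₁])
      refine ⟨v, hΩ.mem_of_adj r s v hr hs hrv ?_, hsv, huv⟩
      rw [G.dist_comm, hsv, G.dist_comm, h.1]
    · exact ⟨r, hr, h.1, h₂⟩
  have hvs := (h.of_dist_eq_two H K hΩ hs hr hv hsv).symm K
  exact ⟨v, hv, (hvs.of_dist_eq_two H K hΩ hv hs hu (G.dist_comm.trans huv)).symm K⟩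

lemma of_mem (h : ExtendsToWeightPair G t κ w s r) (H : TriangleFreeNegType G D c a b q)
    (K : IsWeightSystem G t 3 γ κ) (hΩ : IsClosedSubgraph G Ω γ₁ 2) (hs : s ∈ Ω) (hr : r ∈ Ω)
    (hu : u ∈ Ω) (hz : z ∈ Ω) (huz : G.dist u z = 2) : ExtendsToWeightPair G t κ w u z := by
  obtain ⟨v, hv, huv⟩ : ∃ v ∈ Ω, ExtendsToWeightPair G t κ w u v := by
    have hle := hΩ.dist_le s u hs hu
    obtain hsu | hsu | hsu : G.dist s u = 0 ∨ G.dist s u = 1 ∨ G.dist s u = 2 := by lia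
    · obtain rfl := H.connected.dist_eq_zero_iff.mp hsu
      exact ⟨r, hr, h⟩
    · exact h.exists_of_adj H K hΩ hs hr hu (SimpleGraph.dist_eq_one_iff_adj.mp hsu)
    · exact ⟨s, hs, (h.of_dist_eq_two H K hΩ hs hr hu hsu).symm K⟩
  exact huv.of_dist_eq_two H K hΩ hu hv hz huz

end ExtendsToWeightPair

namespace TriangleFreeNegType

variable [Fintype V] {G : SimpleGraph V} {D γ : ℕ} {c a b : ℕ → ℕ} {q κ : ℝ} {t : ℕ → ℝ}
  {w : V → ℝ} {Ω : Set V} {p s u v x y z : V}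

lemma extendsToWeightPair_of_mem (H : TriangleFreeNegType G D c a b q)
    (K : IsWeightSystem G t 3 γ κ) (hΩ : IsClosedSubgraph G Ω (c 2 + a 2) 2) (hu : u ∈ Ω)
    (hv : v ∈ Ω) (huv : ExtendsToWeightPair G t κ w u v) (hp : p ∈ Ω) (hs : s ∈ Ω)
    (hps : G.Adj p s) (hpz : G.Adj p z) (hz : z ∈ weightSet G t 3 κ w) (hne : s ≠ z) :
    ExtendsToWeightPair G t κ w s z := by
  have hsz : G.dist s z = 2 := dist_eq_two_of_adj_of_adj H.connected H.cliqueFree hps hpz hne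
  by_cases hzΩ : z ∈ Ω
  · exact huv.of_mem H K hΩ hu hv hs hzΩ hsz
  have hcard : 1 < {r | r ∈ Ω ∧ G.Adj s r}.ncard := by
    have := H.c_pos (m := 1) (hsz.symm.trans_le (H.dist_le s z))
    have := H.a_two_pos
    rw [hΩ.ncard_eq s hs]
    lia
  obtain ⟨r, ⟨hr, hsr⟩, hrp⟩ := Set.exists_ne_of_one_lt_ncard hcard p
  have hrp₂ : G.dist r p = 2 :=
    dist_eq_two_of_adj_of_adj H.connected H.cliqueFree hsr hps.symm hrp
  have hzr : G.dist z r = 3 :=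
    hΩ.dist_eq_three H.connected hp hzΩ hpz hr (G.dist_comm.trans hrp₂)
  have hrz := (huv.of_mem H K hΩ hu hv hr hp hrp₂).isWeightPair H K hz hpz
    (G.dist_comm.trans hzr)
  exact .symm ⟨G.dist_comm.trans hsz, r, K.symm hrz, hsr⟩ K

lemma extendsToWeightPair_of_adj_of_adj (H : TriangleFreeNegType G D c a b q)
    (K : IsWeightSystem G t 3 γ κ) (hp : p ∈ weightSet G t 3 κ w) (hs : s ∈ weightSet G t 3 κ w)
    (hz : z ∈ weightSet G t 3 κ w) (hps : G.Adj p s) (hpz : G.Adj p z) (hne : s ≠ z) :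
    ExtendsToWeightPair G t κ w s z := by
  obtain ⟨y, hw⟩ := hp
  obtain ⟨r, hyr, hrp⟩ := exists_adj_dist_eq H.connected (K.symm hw).1
  have hpr : ExtendsToWeightPair G t κ w p r := ⟨G.dist_comm.trans hrp, y, hw, hyr.symm⟩
  obtain ⟨Ω, hpΩ, hrΩ, hΩ⟩ := H.exists_isClosedSubgraph_two hpr.1
  by_cases hsΩ : s ∈ Ω
  · exact H.extendsToWeightPair_of_mem K hΩ hpΩ hrΩ hpr hpΩ hsΩ hps hpz hz hne
  obtain ⟨s', hps', hs'r⟩ := exists_adj_dist_eq H.connected hpr.1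
  have hs'Ω : s' ∈ Ω := hΩ.mem_of_adj p r s' hpΩ hrΩ hps' (by
    rw [hs'r, hpr.1]
    exact one_le_two)
  have hs's : ExtendsToWeightPair G t κ w s' s :=
    H.extendsToWeightPair_of_mem K hΩ hpΩ hrΩ hpr hpΩ hs'Ω hps' hps hs
      (ne_of_mem_of_not_mem hs'Ω hsΩ)
  obtain ⟨Ω', hs'Ω', hsΩ', hΩ'⟩ := H.exists_isClosedSubgraph_two hs's.1
  have hpΩ' : p ∈ Ω' := hΩ'.mem_of_adj s' s p hs'Ω' hsΩ' hps'.symm (by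
    rw [SimpleGraph.dist_eq_one_iff_adj.mpr hps, hs's.1]
    exact one_le_two)
  exact H.extendsToWeightPair_of_mem K hΩ' hs'Ω' hsΩ' hs's hpΩ' hsΩ' hps hpz hz hne

lemma dist_le_three_and_of_reachableIn (H : TriangleFreeNegType G D c a b q)
    (K : IsWeightSystem G t 3 γ κ) (hs : s ∈ weightSet G t 3 κ w)
    (hsz : ReachableIn G (weightSet G t 3 κ w) s z) :
    G.dist s z ≤ 3 ∧ (G.dist s z = 2 → ExtendsToWeightPair G t κ w s z) ∧
      (G.dist s z = 3 → IsWeightPair G t 3 κ w s z) := by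
  induction hsz with
  | refl => simp
  | @tail z z' _ hadj ih =>
    obtain ⟨hzz', hz, hz'⟩ := hadj
    obtain ⟨hle, ih₂, ih₃⟩ := ih
    have hsz' := dist_le_dist_add_one_of_adj H.connected hzz' s
    rw [G.dist_comm, G.dist_comm (u := z)] at hsz'
    obtain h | h | h | h : G.dist s z = 0 ∨ G.dist s z = 1 ∨ G.dist s z = 2 ∨ G.dist s z = 3 := by
      lia
    · exact ⟨by lia, by lia, by lia⟩
    · refine ⟨by lia, fun h₂ => ?_, by lia⟩
      refine H.extendsToWeightPair_of_adj_of_adj K hz hs hz'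
        (SimpleGraph.dist_eq_one_iff_adj.mp h).symm hzz' ?_
      rintro rfl
      simp at h₂
    · refine ⟨by lia, fun h₂ => ?_, (ih₂ h).isWeightPair H K hz' hzz'⟩
      obtain ⟨Ω, hsΩ, hzΩ, hΩ⟩ := H.exists_isClosedSubgraph_two h
      have hz'Ω := hΩ.mem_of_adj z s z' hzΩ hsΩ hzz' (by rw [G.dist_comm, h₂, G.dist_comm, h])
      exact (ih₂ h).of_mem H K hΩ hsΩ hzΩ hsΩ hz'Ω h₂
    · have hle := K.dist_le_of_mem_weightSet (K.symm (ih₃ h)) hzz' hz'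
      exact ⟨G.dist_comm.trans_le hle, fun h₂ => ⟨h₂, z, ih₃ h, hzz'.symm⟩, K.right (ih₃ h) hzz'⟩

theorem exists_isClosedSubgraph_three (H : TriangleFreeNegType G D c a b q)
    (hxy : G.dist x y = 3) :
    ∃ Ω : Set V, x ∈ Ω ∧ y ∈ Ω ∧ IsClosedSubgraph G Ω (c 3 + a 3) 3 := by
  obtain ⟨κ, K⟩ := H.exists_isWeightSystem_three
  refine K.exists_isClosedSubgraph le_rfl (fun w s hs z hsz => ?_)
    (fun w s hs z hsz hge u hu => ?_) hxy
  · exact (H.dist_le_three_and_of_reachableIn K hs hsz).1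
  · obtain ⟨hle, h₂, h₃⟩ := H.dist_le_three_and_of_reachableIn K hs hsz
    obtain h | h : G.dist s z = 2 ∨ G.dist s z = 3 := by lia
    · exact (h₂ h).mem_weightSet K hu
    · exact K.mem_weightSet_of_mem (h₃ h) hu

end TriangleFreeNegType

namespace IsClosedSubgraph

variable {G : SimpleGraph V} {Ω : Set V} {γ m n : ℕ} {u v w : V}

lemma mem_of_dist_add_dist_le (hΩ : IsClosedSubgraph G Ω γ m) (hG : G.Connected) (hu : u ∈ Ω)
    (hw : w ∈ Ω) (h : G.dist u v + G.dist v w ≤ G.dist u w + 1) : v ∈ Ω := by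
  induction hn : G.dist u v generalizing u with
  | zero => rwa [← hG.dist_eq_zero_iff.mp hn]
  | succ n ih =>
    obtain ⟨s, hus, hsv⟩ := exists_adj_dist_eq hG hn
    have := hG.dist_triangle (u := s) (v := v) (w := w)
    have := dist_le_dist_add_one_of_adj hG hus.symm w
    exact ih (hΩ.mem_of_adj u w s hu hw hus (by lia)) (by lia) hsv

lemma exists_induce_walk_length_eq (hΩ : IsClosedSubgraph G Ω γ m) (hG : G.Connected) (u v : Ω)
    (h : G.dist (u : V) v = n) : ∃ p : (G.induce Ω).Walk u v, p.length = n := by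
  induction n generalizing u with
  | zero =>
    obtain rfl : u = v := Subtype.ext (hG.dist_eq_zero_iff.mp h)
    exact ⟨.nil, rfl⟩
  | succ n ih =>
    obtain ⟨s, hus, hsv⟩ := exists_adj_dist_eq hG h
    obtain ⟨p, hp⟩ := ih ⟨s, hΩ.mem_of_adj u v s u.2 v.2 hus (by lia)⟩ hsv
    exact ⟨.cons (SimpleGraph.induce_adj.mpr hus) p, congrArg (· + 1) hp⟩

lemma dist_induce (hΩ : IsClosedSubgraph G Ω γ m) (hG : G.Connected) (u v : Ω) :
    (G.induce Ω).dist u v = G.dist (u : V) v := by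
  obtain ⟨p, hp⟩ := hΩ.exists_induce_walk_length_eq hG u v rfl
  refine le_antisymm (hp ▸ SimpleGraph.dist_le p) ?_
  obtain ⟨r, hr⟩ := p.reachable.exists_walk_length_eq_dist
  rw [← hr, ← r.length_map (SimpleGraph.Embedding.induce Ω).toHom]
  exact SimpleGraph.dist_le _

end IsClosedSubgraph

section Small

variable {G : SimpleGraph V} {x y : V}

lemma isClosedSubgraph_singleton (hG : G.Connected) (x : V) : IsClosedSubgraph G {x} 0 0 where
  mem_of_adj := by
    rintro u v s rfl rfl - hs
    rw [SimpleGraph.dist_self] at hs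
    exact hG.dist_eq_zero_iff.mp (Nat.le_zero.mp hs)
  ncard_eq := by
    rintro u rfl
    rw [Set.ncard_eq_zero ((Set.finite_singleton u).subset fun _ h => h.1)]
    ext v
    grind [SimpleGraph.Adj.ne]
  dist_le := by
    rintro u v rfl rfl
    exact SimpleGraph.dist_self.le

lemma isClosedSubgraph_pair (hG : G.Connected) (hT : G.CliqueFree 3) (hxy : G.Adj x y) :
    IsClosedSubgraph G {x, y} 1 1 where
  mem_of_adj u v s hu hv hus hsv := by
    obtain rfl | hne := eq_or_ne s v
    · exact hv
    obtain rfl | huv := eq_or_ne u v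
    · rw [SimpleGraph.dist_self, Nat.le_zero, hG.dist_eq_zero_iff] at hsv
      exact absurd hsv hne
    have hadj : G.Adj u v := by
      obtain rfl | rfl := hu <;> obtain rfl | rfl := hv
      exacts [absurd rfl huv, hxy, hxy.symm, absurd rfl huv]
    have := dist_eq_two_of_adj_of_adj hG hT hus hadj hne
    have := SimpleGraph.dist_eq_one_iff_adj.mpr hadj
    lia
  ncard_eq := by
    rintro u (rfl | rfl) <;> rw [Set.ncard_eq_one]
    · exact ⟨y, by ext v; grind [SimpleGraph.Adj.ne]⟩
    · exact ⟨x, by ext v; grind [SimpleGraph.Adj.ne, SimpleGraph.Adj.symm]⟩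
  dist_le := by
    have h := SimpleGraph.dist_eq_one_iff_adj.mpr hxy
    rintro u v (rfl | rfl) (rfl | rfl)
    exacts [by simp, h.le, (G.dist_comm.trans h).le, by simp]

end Small

theorem TriangleFreeNegType.exists_isClosedSubgraph [Fintype V] {G : SimpleGraph V} {D : ℕ}
    {c a b : ℕ → ℕ} {q : ℝ} (H : TriangleFreeNegType G D c a b q) {x y : V}
    (hxy : G.dist x y ≤ 3) :
    ∃ (Ω : Set V) (γ : ℕ), x ∈ Ω ∧ y ∈ Ω ∧ IsClosedSubgraph G Ω γ (G.dist x y) := by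
  obtain h | h | h | h : G.dist x y = 0 ∨ G.dist x y = 1 ∨ G.dist x y = 2 ∨ G.dist x y = 3 := by
    lia
  all_goals rw [h]
  · exact ⟨{x}, 0, rfl, (H.connected.dist_eq_zero_iff.mp h).symm,
      isClosedSubgraph_singleton H.connected x⟩
  · exact ⟨{x, y}, 1, .inl rfl, .inr rfl,
      isClosedSubgraph_pair H.connected H.cliqueFree (SimpleGraph.dist_eq_one_iff_adj.mp h)⟩
  · obtain ⟨Ω, hx, hy, hΩ⟩ := H.exists_isClosedSubgraph_two h
    exact ⟨Ω, _, hx, hy, hΩ⟩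
  · obtain ⟨Ω, hx, hy, hΩ⟩ := H.exists_isClosedSubgraph_three h
    exact ⟨Ω, _, hx, hy, hΩ⟩

section Parameters

variable {G : SimpleGraph V} {D : ℕ} {p : ℕ → ℕ → ℕ → ℕ} {q α β : ℝ}

lemma card_eq_of_isDistRegularWith (hp : G.IsDistRegularWith D p) (hD : 1 ≤ D)
    {x y : V} (hxy : G.dist x y ≤ D) {j : ℕ} (hj : j ≤ D) {S : Finset V}
    (hS : ∀ s, s ∈ S ↔ G.Adj x s ∧ G.dist s y = j) : S.card = p (G.dist x y) 1 j := by
  rw [← hp (G.dist x y) 1 j hxy hD hj x y rfl, ← Set.ncard_coe_finset]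
  congr 1
  ext s
  rw [Finset.mem_coe, hS, Set.mem_ofPred_eq, SimpleGraph.dist_eq_one_iff_adj, G.dist_comm]

lemma HasClassicalParams.hasIntersectionArray [Fintype V] (hq : HasClassicalParams D p q α β)
    (hp : G.IsDistRegularWith D p) (hG : G.Connected) (hD : 1 ≤ D) (hle : ∀ x y, G.dist x y ≤ D)
    (hdiam : ∃ x y, G.dist x y = D) :
    HasIntersectionArray G D (fun i => p i 1 (i - 1)) (fun i => p i 1 i)
      (fun i => p i 1 (i + 1)) where
  connected := hG
  dist_le := hle
  exists_dist_eq_diam := hdiam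
  card_closerNbrs x y := by
    obtain h | h := Nat.eq_zero_or_pos (G.dist x y)
    · have h₀ := hq.2.2.1 0 D.zero_le
      rw [gaussBracket, Finset.sum_range_zero, zero_mul, Nat.cast_eq_zero] at h₀
      simp only [h, h₀, Finset.card_eq_zero]
      ext s
      simp [h]
    · have := hle x y
      refine card_eq_of_isDistRegularWith hp hD (hle x y) (by lia) fun s => ?_
      rw [mem_closerNbrs, eq_tsub_iff_add_eq_of_le h]
  card_levelNbrs x y :=
    card_eq_of_isDistRegularWith hp hD (hle x y) (hle x y) fun _ => mem_levelNbrs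
  card_fartherNbrs x y := by
    obtain h | h := (hle x y).eq_or_lt
    · have h₀ := hq.2.2.2 D le_rfl
      rw [sub_self, zero_mul, Nat.cast_eq_zero] at h₀
      simp only [h, h₀, Finset.card_eq_zero]
      ext s
      have := hle s y
      simp only [mem_fartherNbrs, Finset.notMem_empty, iff_false]
      lia
    · exact card_eq_of_isDistRegularWith hp hD (hle x y) h fun _ => mem_fartherNbrs

end Parameters

/-- A distance-regular graph with classical parameters `(D, b, α, β)`,
`D ≥ 3`, `a₁ = 0` and `a₂ ≠ 0` is `3`-bounded: for all vertices `x, y` with `∂(x,y) ≤ 3`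
there is a regular weak-geodetically closed (induced) subgraph of diameter `∂(x,y)`
containing `x` and `y`.  (Here `a₁ = p¹₁₁` and `a₂ = p²₁₂`.) -/
theorem three_bounded [Fintype V] (G : SimpleGraph V) (hconn : G.Connected)
    (D : ℕ) (hD : 3 ≤ D)
    (hdiam_le : ∀ x y : V, G.dist x y ≤ D) (hdiam : ∃ x y : V, G.dist x y = D)
    (p : ℕ → ℕ → ℕ → ℕ) (hdr : G.IsDistRegularWith D p)
    (b α β : ℝ) (hcp : HasClassicalParams D p b α β)
    (ha1 : p 1 1 1 = 0) (ha2 : p 2 1 2 ≠ 0) :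
    ∀ x y : V, G.dist x y ≤ 3 →
      ∃ Ω : Set V, x ∈ Ω ∧ y ∈ Ω ∧
        -- the induced subgraph on Ω is regular
        (∃ γ : ℕ, ∀ u ∈ Ω, {w | w ∈ Ω ∧ G.Adj u w}.ncard = γ) ∧
        -- Ω is weak-geodetically closed
        (∀ u v w : V, u ∈ Ω → w ∈ Ω →
          G.dist u v + G.dist v w ≤ G.dist u w + 1 → v ∈ Ω) ∧
        -- the induced subgraph on Ω has diameter ∂(x,y)
        (∀ u v : Ω, (G.induce Ω).dist u v ≤ G.dist x y) ∧
        (∃ u v : Ω, (G.induce Ω).dist u v = G.dist x y) := by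
  intro x y hxy
  have R := hcp.hasIntersectionArray hdr hconn (by lia) hdiam_le hdiam
  obtain ⟨hb₀, hb₁, hc, hb⟩ := hcp
  have H := R.triangleFreeNegType hD hc hb hb₀ hb₁ ha1 ha2
  obtain ⟨Ω, γ, hx, hy, hΩ⟩ := H.exists_isClosedSubgraph hxy
  refine ⟨Ω, hx, hy, ⟨γ, hΩ.ncard_eq⟩,
    fun u v w hu hw h => hΩ.mem_of_dist_add_dist_le hconn hu hw h, fun u v => ?_,
    ⟨x, hx⟩, ⟨y, hy⟩, hΩ.dist_induce hconn _ _⟩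
  rw [hΩ.dist_induce hconn]
  exact hΩ.dist_le u v u.2 v.2
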